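/- arXiv:2409.04028 — 3 statements merged into one kernel-verified Lean document; each statement's English description precedes it below -/
import Mathlib

section
/- Let f : 𝔹 → ℂ be holomorphic with f(0) = 1, F(x) = f(x)·x for x ∈ 𝔹, and assume F is biholomorphic on 𝔹. Then for all x ∈ 𝔹, ‖x‖/(1+‖x‖)² ≤ ‖F(x)‖ ≤ ‖x‖/(1−‖x‖)². -/
open Metric Set

noncomputable section

/-- A holomorphic map is biholomorphic on an open set `s` if it is holomorphic and injective
on `s` and admits a holomorphic inverse on the image `f '' s`. -/
def IsBiholoOn {E₁ E₂ : Type*} [NormedAddCommGroup E₁] [NormedSpace ℂ E₁]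
    [NormedAddCommGroup E₂] [NormedSpace ℂ E₂] (f : E₁ → E₂) (s : Set E₁) : Prop :=
  DifferentiableOn ℂ f s ∧ Set.InjOn f s ∧
    ∃ g : E₂ → E₁, DifferentiableOn ℂ g (f '' s) ∧ ∀ x ∈ s, g (f x) = x


theorem gt_segment {f : ℂ → ℂ} (hf : DifferentiableOn ℂ f (ball 0 1)) (hi : InjOn f (ball 0 1))
    (h0 : f 0 = 0) {ρ : ℝ} (hρ0 : 0 < ρ) (hρ : ρ < 1) (v : ℂ)
    (hv : ∀ t : ℝ, 0 ≤ t → t ≤ 1 → ∀ z : ℂ, ‖z‖ = ρ → f z ≠ t * v) :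
    ∀ t : ℝ, 0 ≤ t → t ≤ 1 → ∃ z ∈ ball (0 : ℂ) ρ, f z = t * v := by
  have hop : IsOpen (f '' ball 0 ρ) := by
    rcases (hf.analyticOnNhd isOpen_ball).is_constant_or_isOpen
      (convex_ball (0 : ℂ) 1).isPreconnected with ⟨w, hw⟩ | h
    · exfalso
      have h1 : (1 / 2 : ℂ) ∈ ball (0 : ℂ) 1 := by simp; norm_num
      have := hi h1 (mem_ball_self one_pos) ((hw _ h1).trans (hw _ (mem_ball_self one_pos)).symm)
      norm_num at this
    · exact h _ (ball_subset_ball hρ.le) isOpen_ball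
  have hcb : closedBall (0 : ℂ) ρ ⊆ ball 0 1 := closedBall_subset_ball hρ
  have hcl : closure (f '' ball 0 ρ) ⊆ f '' closedBall 0 ρ := by
    apply closure_minimal (image_mono ball_subset_closedBall)
    exact ((isCompact_closedBall (0 : ℂ) ρ).image_of_continuousOn
      (hf.continuousOn.mono hcb)).isClosed
  have key : segment ℝ (0 : ℂ) v ⊆ f '' ball 0 ρ := by
    apply (convex_segment (0 : ℂ) v).isPreconnected.subset_of_closure_inter_subset hop
    · exact ⟨0, left_mem_segment _ _ _, 0, mem_ball_self hρ0, h0⟩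
    · rintro w ⟨hw, hs⟩
      obtain ⟨z, hz, rfl⟩ := hcl hw
      rw [segment_eq_image] at hs
      obtain ⟨t, ht, hts⟩ := hs
      simp only [smul_zero, zero_add, Complex.real_smul] at hts
      refine ⟨z, ?_, rfl⟩
      rw [mem_ball_zero_iff]
      rw [mem_closedBall_zero_iff] at hz
      refine lt_of_le_of_ne hz fun h => hv t ht.1 ht.2 z h hts.symm
  intro t h1 h2
  have : (t * v : ℂ) ∈ segment ℝ (0 : ℂ) v := by
    rw [segment_eq_image]
    exact ⟨t, ⟨h1, h2⟩, by simp⟩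
  obtain ⟨z, hz, h⟩ := key this
  exact ⟨z, hz, h⟩

theorem gt_circle {B : ℂ → ℂ} (hB : DifferentiableOn ℂ B (ball 0 1)) (b : ℂ) {s : ℝ}
    (hs0 : 0 < s) (hs : s < 1) :
    2 * Real.pi * ((s ^ 4)⁻¹ + ‖b‖ ^ 2) ≤
      ∫ θ in (-Real.pi)..Real.pi,
        ‖-((circleMap 0 s θ) ^ 2)⁻¹ + b + circleMap 0 s θ * B (circleMap 0 s θ)‖ ^ 2 := by
  set H : ℂ → ℂ := fun z => -b * z ^ 2 / s ^ 4 + (-z ^ 2 / s ^ 4 + (starRingEnd ℂ) b) * (z * B z)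
    with hH
  have hsub : closedBall (0 : ℂ) |s| ⊆ ball 0 1 := by
    rw [abs_of_pos hs0]; exact closedBall_subset_ball hs
  have hHd : DifferentiableOn ℂ H (ball 0 1) := by
    fun_prop
  have hav : Real.circleAverage H 0 s = 0 := by
    rw [DiffContOnCl.circleAverage]
    · simp [hH]
    · exact (hHd.mono hsub).diffContOnCl_ball subset_rfl
  have hcm : ∀ θ, circleMap 0 s θ ∈ ball (0 : ℂ) 1 := by
    intro θ; simp [abs_of_pos hs0, hs]
  have hBc : Continuous fun θ => B (circleMap 0 s θ) :=
    hB.continuousOn.comp_continuous (continuous_circleMap 0 s) hcm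
  have hHc : Continuous fun θ => H (circleMap 0 s θ) :=
    hHd.continuousOn.comp_continuous (continuous_circleMap 0 s) hcm
  have hintegral : ∫ θ in (-Real.pi)..Real.pi, H (circleMap 0 s θ) = 0 := by
    have hper : Function.Periodic (fun θ => H (circleMap 0 s θ)) (2 * Real.pi) := fun θ => by
      simp [periodic_circleMap 0 s θ]
    have h1 := hper.intervalIntegral_add_eq (-Real.pi) 0
    rw [show -Real.pi + 2 * Real.pi = Real.pi by ring, zero_add] at h1
    rw [h1]
    rw [Real.circleAverage] at hav
    have : (2 * Real.pi)⁻¹ ≠ 0 := by positivity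
    exact (smul_eq_zero.mp hav).resolve_left this
  have hre : ∫ θ in (-Real.pi)..Real.pi, (H (circleMap 0 s θ)).re = 0 := by
    have := Complex.reCLM.intervalIntegral_comp_comm (hHc.intervalIntegrable (μ := MeasureTheory.volume) (-Real.pi) Real.pi)
    simp only [Complex.reCLM_apply] at this
    rw [this, hintegral]; simp
  have hlow : ∫ θ in (-Real.pi)..Real.pi, (((s ^ 4)⁻¹ + ‖b‖ ^ 2) + 2 * (H (circleMap 0 s θ)).re)
      = 2 * Real.pi * ((s ^ 4)⁻¹ + ‖b‖ ^ 2) := by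
    rw [intervalIntegral.integral_add, intervalIntegral.integral_const_mul, hre]
    · simp; ring
    · simp
    · exact (continuous_const.mul (Complex.continuous_re.comp hHc)).intervalIntegrable _ _
  rw [← hlow]
  have hne : ∀ θ, circleMap 0 s θ ≠ 0 := fun θ => by
    simpa using hs0.ne'
  apply intervalIntegral.integral_mono_on (by linarith [Real.pi_pos])
  · exact (continuous_const.add (continuous_const.mul (Complex.continuous_re.comp hHc))).intervalIntegrable _ _
  · refine Continuous.intervalIntegrable ?_ _ _
    have : Continuous fun θ => ((circleMap 0 s θ) ^ 2)⁻¹ :=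
      ((continuous_circleMap 0 s).pow 2).inv₀ fun θ => pow_ne_zero 2 (hne θ)
    exact ((this.neg.add continuous_const).add
      ((continuous_circleMap 0 s).mul hBc)).norm.pow 2
  · intro θ _
    set z := circleMap 0 s θ with hz
    have hzz : z * (starRingEnd ℂ) z = (s : ℂ) ^ 2 := by
      rw [Complex.mul_conj, Complex.normSq_eq_norm_sq, hz]; simp
    have hs' : (s : ℂ) ≠ 0 := by exact_mod_cast hs0.ne'
    have hcz : (starRingEnd ℂ) (z ^ 2)⁻¹ = z ^ 2 / s ^ 4 := by
      have h1 : (starRingEnd ℂ) z ≠ 0 := (map_ne_zero _).mpr (hne θ)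
      rw [map_inv₀, map_pow]
      field_simp
      rw [← mul_pow, mul_comm (starRingEnd ℂ z) z, hzz]; ring
    have hnw : ‖(z ^ 2)⁻¹‖ ^ 2 = (s ^ 4)⁻¹ := by
      rw [norm_inv, norm_pow, hz]; simp; ring_nf
    have hHz : H z = -(b * (starRingEnd ℂ) (z ^ 2)⁻¹) + (-(starRingEnd ℂ) (z ^ 2)⁻¹ + (starRingEnd ℂ) b) * (z * B z) := by
      rw [hcz]; simp only [hH]; ring
    rw [hHz, ← hnw]
    generalize (z ^ 2)⁻¹ = w
    generalize z * B z = y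
    simp only [← Complex.normSq_eq_norm_sq, Complex.normSq_apply, Complex.add_re, Complex.add_im, Complex.neg_re, Complex.neg_im, Complex.mul_re, Complex.conj_re, Complex.conj_im]
    nlinarith [sq_nonneg y.re, sq_nonneg y.im]

open MeasureTheory in
theorem gt_annulus {B : ℂ → ℂ} (hB : DifferentiableOn ℂ B (ball 0 1)) (b : ℂ) {ρ r : ℝ}
    (hρ : 0 < ρ) (hρr : ρ < r) (hr : r < 1) :
    ENNReal.ofReal (Real.pi * ((ρ ^ 2)⁻¹ - (r ^ 2)⁻¹ + ‖b‖ ^ 2 * (r ^ 2 - ρ ^ 2))) ≤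
      ∫⁻ z in {z : ℂ | ρ < ‖z‖ ∧ ‖z‖ < r}, ENNReal.ofReal (‖-(z ^ 2)⁻¹ + b + z * B z‖ ^ 2) := by
  set D : ℂ → ℝ := fun z => ‖-(z ^ 2)⁻¹ + b + z * B z‖ ^ 2 with hD
  have hDc : ContinuousOn D (ball 0 1 \ {0}) := by
    have h1 : ContinuousOn (fun z : ℂ => (z ^ 2)⁻¹) (ball 0 1 \ {0}) := by
      apply ContinuousOn.inv₀ (by fun_prop)
      rintro z ⟨_, hz⟩
      exact pow_ne_zero 2 hz
    have h2 : ContinuousOn B (ball 0 1 \ {0}) := hB.continuousOn.mono sdiff_subset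
    exact ((h1.neg.add continuousOn_const).add (continuousOn_id.mul h2)).norm.pow 2
  have hmeas : MeasurableSet {z : ℂ | ρ < ‖z‖ ∧ ‖z‖ < r} :=
    (measurableSet_lt measurable_const measurable_norm).inter
      (measurableSet_lt measurable_norm measurable_const)
  set S : Set (ℝ × ℝ) := Ioo ρ r ×ˢ Ioo (-Real.pi) Real.pi with hS
  have hSm : MeasurableSet S := measurableSet_Ioo.prod measurableSet_Ioo
  have hcm : Continuous fun p : ℝ × ℝ => circleMap 0 p.1 p.2 := by
    unfold circleMap; fun_prop
  have hmaps : ∀ s ∈ Ioo ρ r, ∀ θ, circleMap 0 s θ ∈ ball (0 : ℂ) 1 \ {0} := by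
    intro s hs θ
    have : 0 < s := hρ.trans hs.1
    refine ⟨?_, ?_⟩
    · simp [abs_of_pos this, hs.2.trans hr]
    · simpa using this.ne'
  have hpc : ContinuousOn (fun p : ℝ × ℝ => p.1 * D (circleMap 0 p.1 p.2)) S := by
    apply continuousOn_fst.mul
    apply hDc.comp hcm.continuousOn
    rintro p ⟨hp, _⟩
    exact hmaps _ hp _
  have step1 : ∫⁻ p in S, ENNReal.ofReal (p.1 * D (circleMap 0 p.1 p.2)) ≤
      ∫⁻ z in {z : ℂ | ρ < ‖z‖ ∧ ‖z‖ < r}, ENNReal.ofReal (D z) := by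
    rw [← lintegral_indicator hmeas, ← Complex.lintegral_comp_polarCoord_symm]
    refine le_trans ?_ (lintegral_mono_set (s := S) ?_)
    · apply le_of_eq
      apply setLIntegral_congr_fun hSm
      rintro ⟨s, θ⟩ ⟨hp, _⟩
      simp only at hp
      have h0 : 0 < s := hρ.trans hp.1
      have hc : Complex.polarCoord.symm (s, θ) = circleMap 0 s θ := by
        rw [Complex.polarCoord_symm_apply, circleMap_zero, Complex.exp_mul_I]
        simp
      simp only [hc]
      rw [indicator_of_mem, ENNReal.ofReal_mul h0.le, smul_eq_mul]
      simp [abs_of_pos h0, hp.1, hp.2]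
    · rw [polarCoord_target]
      exact prod_mono (fun s hs => hρ.trans hs.1) subset_rfl
  refine le_trans ?_ step1
  rw [Measure.volume_eq_prod, ← Measure.prod_restrict, lintegral_prod]
  swap
  · rw [Measure.prod_restrict]
    exact (ENNReal.continuous_ofReal.comp_continuousOn hpc).aemeasurable hSm
  have step2 : ∫⁻ s in Ioo ρ r, ENNReal.ofReal (s * (2 * Real.pi * ((s ^ 4)⁻¹ + ‖b‖ ^ 2))) ≤
      ∫⁻ s in Ioo ρ r, ∫⁻ θ in Ioo (-Real.pi) Real.pi, ENNReal.ofReal (s * D (circleMap 0 s θ)) := by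
    apply setLIntegral_mono' measurableSet_Ioo
    intro s hs
    have h0 : 0 < s := hρ.trans hs.1
    have hcont : Continuous fun θ => s * D (circleMap 0 s θ) :=
      continuous_const.mul (hDc.comp_continuous (continuous_circleMap 0 s) (hmaps s hs))
    rw [← ofReal_integral_eq_lintegral_ofReal]
    · apply ENNReal.ofReal_le_ofReal
      rw [← integral_Ioc_eq_integral_Ioo, ← intervalIntegral.integral_of_le
        (by linarith [Real.pi_pos]), intervalIntegral.integral_const_mul]
      exact mul_le_mul_of_nonneg_left (gt_circle hB b h0 (hs.2.trans hr)) h0.le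
    · exact (hcont.integrableOn_Icc (a := -Real.pi) (b := Real.pi)).mono_set Ioo_subset_Icc_self
    · exact Filter.Eventually.of_forall fun θ => mul_nonneg h0.le (sq_nonneg _)
  refine le_trans ?_ step2
  have hcI : ContinuousOn (fun s : ℝ => s * (2 * Real.pi * ((s ^ 4)⁻¹ + ‖b‖ ^ 2))) (Icc ρ r) := by
    have : ContinuousOn (fun s : ℝ => (s ^ 4)⁻¹) (Icc ρ r) := by
      apply ContinuousOn.inv₀ (by fun_prop)
      intro s hs
      exact pow_ne_zero _ (hρ.trans_le hs.1).ne'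
    fun_prop
  rw [← ofReal_integral_eq_lintegral_ofReal]
  · apply ENNReal.ofReal_le_ofReal
    rw [← integral_Ioc_eq_integral_Ioo, ← intervalIntegral.integral_of_le hρr.le]
    rw [intervalIntegral.integral_eq_sub_of_hasDerivAt
      (f := fun s : ℝ => Real.pi * (-(s ^ 2)⁻¹ + ‖b‖ ^ 2 * s ^ 2))]
    · apply le_of_eq; ring
    · intro s hs
      rw [uIcc_of_le hρr.le] at hs
      have h0 : s ≠ 0 := (hρ.trans_le hs.1).ne'
      have h1 : HasDerivAt (fun s : ℝ => s ^ 2) (2 * s) s := by simpa using hasDerivAt_pow 2 s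
      have h2 := ((h1.inv (pow_ne_zero 2 h0)).neg.add (h1.const_mul (‖b‖ ^ 2))).const_mul Real.pi
      refine h2.congr_deriv ?_
      field_simp
    · apply ContinuousOn.intervalIntegrable
      rwa [uIcc_of_le hρr.le]
  · exact hcI.integrableOn_Icc.mono_set Ioo_subset_Icc_self
  · filter_upwards [self_mem_ae_restrict measurableSet_Ioo] with s hs
    have h0 : 0 < s := hρ.trans hs.1
    simp only [Pi.zero_apply]; positivity

/-- The real-linear map `w ↦ d w - c conj w`. -/
def gtL (d c : ℂ) : ℂ →ₗ[ℝ] ℂ where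
  toFun w := d * w - c * (starRingEnd ℂ) w
  map_add' x y := by simp; ring
  map_smul' t x := by simp; ring

theorem gtL_apply (d c w : ℂ) : gtL d c w = d * w - c * (starRingEnd ℂ) w := rfl

theorem gtL_det (d c : ℂ) : LinearMap.det (gtL d c) = ‖d‖ ^ 2 - ‖c‖ ^ 2 := by
  rw [← LinearMap.det_toMatrix Complex.basisOneI, Matrix.det_fin_two]
  simp [LinearMap.toMatrix_apply, gtL_apply, Complex.coe_basisOneI_repr, ← Complex.normSq_eq_norm_sq, Complex.normSq_apply]
  ring

/-- Containment: the image of the outer annulus lies inside the image curve. -/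
theorem gt_contain {q : ℂ → ℂ} (hq : DifferentiableOn ℂ q (ball 0 1))
    (hq0 : ∀ z ∈ ball (0 : ℂ) 1, q z ≠ 0) (hi : InjOn (fun z => z / q z) (ball 0 1))
    {ρ R : ℝ} (hρ0 : 0 < ρ) (hρ : ρ < 1) (hR : 0 < R) (c : ℂ)
    (hc : ∀ z : ℂ, ‖z‖ = ρ → ‖gtL 1 c (q z / z)‖ ≤ R) {z : ℂ} (hz : ρ < ‖z‖) (hz1 : ‖z‖ < 1) :
    ‖gtL 1 c (q z / z)‖ ≤ R := by
  by_contra! hlt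
  have hzb : z ∈ ball (0 : ℂ) 1 := by simpa using hz1
  have hd : DifferentiableOn ℂ (fun z => z / q z) (ball 0 1) := differentiableOn_id.div hq hq0
  obtain ⟨z', hz', he⟩ := gt_segment hd hi (by simp) hρ0 hρ (z / q z) (by
    intro t ht0 ht1 y hy heq
    have hyb : y ∈ ball (0 : ℂ) 1 := by simpa [hy] using hρ
    have hy0 : y ≠ 0 := by rintro rfl; simp at hy; exact hρ0.ne hy
    have ht : t ≠ 0 := by
      rintro rfl
      simp [hy0, hq0 y hyb] at heq
    have htp : 0 < t := lt_of_le_of_ne ht0 ht.symm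
    have h1 : q z / z = t • (q y / y) := by
      rw [← inv_div y, heq, mul_inv, inv_div, Complex.real_smul]
      have : (t : ℂ) ≠ 0 := by exact_mod_cast ht
      field_simp
    rw [h1, map_smul, norm_smul, Real.norm_of_nonneg ht0] at hlt
    have h2 := hc y hy
    nlinarith [norm_nonneg (gtL 1 c (q y / y))]) 1 zero_le_one le_rfl
  have : z' = z := hi (ball_subset_ball hρ.le hz') hzb (by simpa using he)
  subst this
  rw [mem_ball_zero_iff] at hz'
  linarith

open MeasureTheory in
theorem gt_area {K : ℂ → ℂ} (hK : DifferentiableOn ℂ K (ball 0 1)) (b : ℂ)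
    (hq0 : ∀ z ∈ ball (0 : ℂ) 1, 1 + b * z ^ 2 + z ^ 3 * K z ≠ 0)
    (hi : InjOn (fun z => z / (1 + b * z ^ 2 + z ^ 3 * K z)) (ball 0 1)) : ‖b‖ ≤ 1 := by
  set q : ℂ → ℂ := fun z => 1 + b * z ^ 2 + z ^ 3 * K z with hqdef
  have hq : DifferentiableOn ℂ q (ball 0 1) := by fun_prop
  set B : ℂ → ℂ := fun z => 2 * K z + z * deriv K z with hBdef
  have hB : DifferentiableOn ℂ B (ball 0 1) := by
    have := hK.deriv isOpen_ball
    fun_prop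
  have hGeq : ∀ z : ℂ, z ≠ 0 → q z / z = z⁻¹ + b * z + z ^ 2 * K z := by
    intro z hz
    simp only [hqdef]; field_simp
  have hGd : ∀ z ∈ ball (0 : ℂ) 1, z ≠ 0 →
      HasDerivAt (fun z => q z / z) (-(z ^ 2)⁻¹ + b + z * B z) z := by
    intro z hz hz0
    have hKd : HasDerivAt K (deriv K z) z := (hK.differentiableAt (isOpen_ball.mem_nhds hz)).hasDerivAt
    have h1 : HasDerivAt (fun z => z⁻¹ + b * z + z ^ 2 * K z) (-(z ^ 2)⁻¹ + b + z * B z) z := by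
      have h2 := (((hasDerivAt_inv hz0).add ((hasDerivAt_id z).const_mul b)).add
        ((hasDerivAt_pow 2 z).mul hKd))
      refine h2.congr_deriv ?_
      simp [hBdef]; ring
    refine h1.congr_of_eventuallyEq ?_
    filter_upwards [isOpen_ne.mem_nhds hz0] with y hy using hGeq y hy
  have hGi : InjOn (fun z => q z / z) (ball 0 1) := by
    intro x hx y hy hxy
    apply hi hx hy
    simp only at hxy ⊢
    rw [← inv_div, hxy, inv_div]
  obtain ⟨M, hM⟩ := (isCompact_closedBall (0 : ℂ) (1 / 2)).exists_bound_of_continuousOn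
    (hK.continuousOn.mono (closedBall_subset_ball (by norm_num)))
  have hM0 : 0 ≤ M := (norm_nonneg _).trans (hM 0 (by simp))
  set C : ℝ := ‖b‖ ^ 2 + (1 + ‖b‖) * M with hC
  have hC0 : 0 ≤ C := by positivity
  have hmain : ∀ r ρ : ℝ, 0 < ρ → ρ < r → r < 1 → ρ < 1 / 2 →
      (1 - ‖b‖ ^ 2 * ρ ^ 4) * (Real.pi * ((ρ ^ 2)⁻¹ - (r ^ 2)⁻¹ + ‖b‖ ^ 2 * (r ^ 2 - ρ ^ 2))) ≤
        Real.pi * (ρ⁻¹ + C * ρ ^ 2) ^ 2 := by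
    intro r ρ hρ hρr hr hρ2
    set R := ρ⁻¹ + C * ρ ^ 2 with hR
    have hRpos : 0 < R := by positivity
    set c : ℂ := b * ρ ^ 2 with hcdef
    have hcirc : ∀ z : ℂ, ‖z‖ = ρ → ‖gtL 1 c (q z / z)‖ ≤ R := by
      intro z hz
      have hz0 : z ≠ 0 := by rintro rfl; simp at hz; exact hρ.ne hz
      have hcz : (starRingEnd ℂ) z ≠ 0 := (map_ne_zero _).mpr hz0
      have hzz : (ρ : ℂ) ^ 2 = z * (starRingEnd ℂ) z := by
        rw [Complex.mul_conj, Complex.normSq_eq_norm_sq, hz]; simp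
      have hKz : ‖K z‖ ≤ M := hM z (by simp [hz]; linarith)
      have e1 : gtL 1 c (q z / z) = z⁻¹ - (b * (starRingEnd ℂ) b) * (ρ ^ 2 * (starRingEnd ℂ) z) +
          (z ^ 2 * K z - c * (starRingEnd ℂ) (z ^ 2 * K z)) := by
        rw [gtL_apply, hGeq z hz0, hcdef, hzz]
        simp only [map_add, map_mul, map_inv₀]
        field_simp
        ring
      rw [e1]
      have n1 : ‖z⁻¹ - (b * (starRingEnd ℂ) b) * (ρ ^ 2 * (starRingEnd ℂ) z)‖ ≤ ρ⁻¹ + ‖b‖ ^ 2 * ρ ^ 3 := by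
        refine (norm_sub_le _ _).trans (le_of_eq ?_)
        simp [hz, abs_of_pos hρ]; ring
      have n2 : ‖z ^ 2 * K z - c * (starRingEnd ℂ) (z ^ 2 * K z)‖ ≤ (1 + ‖b‖ * ρ ^ 2) * (ρ ^ 2 * M) := by
        refine (norm_sub_le _ _).trans ?_
        have : ‖z ^ 2 * K z‖ ≤ ρ ^ 2 * M := by
          rw [norm_mul, norm_pow, hz]; gcongr
        have hcn : ‖c‖ = ‖b‖ * ρ ^ 2 := by simp [hcdef]
        rw [norm_mul c, RCLike.norm_conj, hcn]
        nlinarith [mul_le_mul_of_nonneg_left this (by positivity : 0 ≤ ‖b‖ * ρ ^ 2)]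
      refine (norm_add_le _ _).trans ((add_le_add n1 n2).trans ?_)
      have p1 : ρ ^ 3 ≤ ρ ^ 2 := pow_le_pow_of_le_one hρ.le (by linarith) (by norm_num)
      have p2 : ρ ^ 2 ≤ 1 := pow_le_one₀ hρ.le (by linarith)
      have p3 : ‖b‖ * ρ ^ 2 ≤ ‖b‖ := mul_le_of_le_one_right (norm_nonneg b) p2
      have p4 : (1 + ‖b‖ * ρ ^ 2) * (ρ ^ 2 * M) ≤ (1 + ‖b‖) * (ρ ^ 2 * M) := by gcongr
      have p5 : ‖b‖ ^ 2 * ρ ^ 3 ≤ ‖b‖ ^ 2 * ρ ^ 2 := by gcongr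
      rw [hR, hC]; linarith
    set A : Set ℂ := {z : ℂ | ρ < ‖z‖ ∧ ‖z‖ < r} with hA
    have hmeas : MeasurableSet A :=
      (measurableSet_lt measurable_const measurable_norm).inter
        (measurableSet_lt measurable_norm measurable_const)
    have hAb : A ⊆ ball 0 1 := fun z hz => by simpa using hz.2.trans hr
    have hvol := lintegral_abs_det_fderiv_eq_addHaar_image volume hmeas
      (f := fun z => q z / z) (f' := fun z => LinearMap.toContinuousLinearMap (gtL (-(z ^ 2)⁻¹ + b + z * B z) 0)) (by
        intro z hz
        have hz0 : z ≠ 0 := by rintro rfl; simp [hA] at hz; linarith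
        have := (hGd z (hAb hz) hz0).hasFDerivAt.restrictScalars ℝ
        convert this.hasFDerivWithinAt using 1
        ext w <;> simp [gtL_apply, mul_comm]) (hGi.mono hAb)
    have hlow := gt_annulus hB b hρ hρr hr
    have hintegral : ∫⁻ z in A, ENNReal.ofReal |(LinearMap.toContinuousLinearMap (gtL (-(z ^ 2)⁻¹ + b + z * B z) 0)).det|
        = ∫⁻ z in A, ENNReal.ofReal (‖-(z ^ 2)⁻¹ + b + z * B z‖ ^ 2) := by
      congr 1; ext z; congr 1
      rw [ContinuousLinearMap.det]
      simp [gtL_det]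
    rw [hintegral] at hvol
    rw [hvol] at hlow
    have hup : volume ((gtL 1 c) '' ((fun z => q z / z) '' A)) ≤ volume (closedBall (0 : ℂ) R) := by
      apply measure_mono
      rintro _ ⟨_, ⟨z, hz, rfl⟩, rfl⟩
      rw [mem_closedBall_zero_iff]
      exact gt_contain hq hq0 hi hρ (hρr.trans hr) hRpos c hcirc hz.1 (hz.2.trans hr)
    rw [Measure.addHaar_image_linearMap, gtL_det, Complex.volume_closedBall] at hup
    have hcn : ‖c‖ ^ 2 = ‖b‖ ^ 2 * ρ ^ 4 := by simp [hcdef]; ring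
    rw [norm_one, one_pow, hcn] at hup
    have hfin : ENNReal.ofReal ((1 - ‖b‖ ^ 2 * ρ ^ 4) * (Real.pi * ((ρ ^ 2)⁻¹ - (r ^ 2)⁻¹ + ‖b‖ ^ 2 * (r ^ 2 - ρ ^ 2)))) ≤
        ENNReal.ofReal (Real.pi * R ^ 2) := by
      have hpos : 0 ≤ (Real.pi * ((ρ ^ 2)⁻¹ - (r ^ 2)⁻¹ + ‖b‖ ^ 2 * (r ^ 2 - ρ ^ 2))) := by
        have : (r ^ 2)⁻¹ ≤ (ρ ^ 2)⁻¹ := by gcongr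
        have h3 : ρ ^ 2 ≤ r ^ 2 := by gcongr
        have h4 : 0 ≤ ‖b‖ ^ 2 * (r ^ 2 - ρ ^ 2) := mul_nonneg (sq_nonneg _) (by linarith)
        exact mul_nonneg Real.pi_pos.le (by linarith)
      calc _ ≤ ENNReal.ofReal (|1 - ‖b‖ ^ 2 * ρ ^ 4| * (Real.pi * ((ρ ^ 2)⁻¹ - (r ^ 2)⁻¹ + ‖b‖ ^ 2 * (r ^ 2 - ρ ^ 2)))) := by
            gcongr; exact le_abs_self _
        _ = ENNReal.ofReal |1 - ‖b‖ ^ 2 * ρ ^ 4| * ENNReal.ofReal (Real.pi * ((ρ ^ 2)⁻¹ - (r ^ 2)⁻¹ + ‖b‖ ^ 2 * (r ^ 2 - ρ ^ 2))) :=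
            ENNReal.ofReal_mul (abs_nonneg _)
        _ ≤ ENNReal.ofReal |1 - ‖b‖ ^ 2 * ρ ^ 4| * volume ((fun z => q z / z) '' A) := by gcongr
        _ ≤ _ := hup
        _ = _ := by
          rw [ENNReal.ofReal_mul Real.pi_pos.le, ENNReal.ofReal_pow hRpos.le, mul_comm]
          congr 1
          rw [← NNReal.coe_real_pi, ENNReal.ofReal_coe_nnreal]
    exact (ENNReal.ofReal_le_ofReal_iff (by positivity)).mp hfin
  have hr : ∀ r : ℝ, 0 < r → r < 1 → ‖b‖ ^ 2 * r ^ 2 - (r ^ 2)⁻¹ ≤ 0 := by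
    intro r h0 h1
    set E : ℝ → ℝ := fun ρ => 2 * C * ρ + C ^ 2 * ρ ^ 4 + ‖b‖ ^ 2 * ρ ^ 2 + ‖b‖ ^ 2 * ρ ^ 2
      - ‖b‖ ^ 2 * ρ ^ 4 * (r ^ 2)⁻¹ + ‖b‖ ^ 2 * ρ ^ 4 * (‖b‖ ^ 2 * (r ^ 2 - ρ ^ 2)) with hE
    have hEt : Filter.Tendsto E (nhdsWithin 0 (Ioi 0)) (nhds 0) := by
      have : Continuous E := by fun_prop
      have h2 := this.tendsto 0
      have h3 : E 0 = 0 := by simp [hE]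
      rw [h3] at h2
      exact h2.mono_left nhdsWithin_le_nhds
    refine ge_of_tendsto hEt ?_
    filter_upwards [Ioo_mem_nhdsGT h0, Ioo_mem_nhdsGT (by norm_num : (0 : ℝ) < 1 / 2)] with ρ h2 h3
    have h4 := hmain r ρ h2.1 h2.2 h1 h3.2
    rw [mul_left_comm] at h4
    have h5 := le_of_mul_le_mul_left h4 Real.pi_pos
    have hρ0 : ρ ≠ 0 := h2.1.ne'
    have e1 : (ρ⁻¹ + C * ρ ^ 2) ^ 2 = (ρ ^ 2)⁻¹ + 2 * C * ρ + C ^ 2 * ρ ^ 4 := by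
      field_simp
      try ring
    have e2 : (1 - ‖b‖ ^ 2 * ρ ^ 4) * ((ρ ^ 2)⁻¹ - (r ^ 2)⁻¹ + ‖b‖ ^ 2 * (r ^ 2 - ρ ^ 2)) =
      (ρ ^ 2)⁻¹ - (r ^ 2)⁻¹ + ‖b‖ ^ 2 * (r ^ 2 - ρ ^ 2) - (‖b‖ ^ 2 * ρ ^ 2
      - ‖b‖ ^ 2 * ρ ^ 4 * (r ^ 2)⁻¹ + ‖b‖ ^ 2 * ρ ^ 4 * (‖b‖ ^ 2 * (r ^ 2 - ρ ^ 2))) := by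
      field_simp
      try ring
    rw [e1, e2] at h5
    simp only [hE]
    linarith
  by_contra! hb
  have hs : Real.sqrt ‖b‖⁻¹ < 1 := by
    rw [Real.sqrt_lt' one_pos, one_pow]; exact inv_lt_one_of_one_lt₀ hb
  obtain ⟨r, hr1, hr2⟩ := exists_between hs
  have hr0 : 0 < r := lt_of_le_of_lt (Real.sqrt_nonneg _) hr1
  have h6 := hr r hr0 hr2
  have h7 : ‖b‖⁻¹ < r ^ 2 := by
    rwa [Real.sqrt_lt' hr0] at hr1
  have hb0 : 0 < ‖b‖ := by linarith
  have h8 : 1 < ‖b‖ * r ^ 2 := by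
    rwa [inv_lt_iff_one_lt_mul₀ hb0, mul_comm] at h7
  have h9 : (r ^ 2) * (r ^ 2)⁻¹ = 1 := by field_simp
  have h10 : 0 < r ^ 2 := by positivity
  nlinarith [mul_le_mul_of_nonneg_left h6 h10.le]

/-- Reciprocal square root of a nonvanishing holomorphic function on the disc. -/
theorem gt_invsqrt {p : ℂ → ℂ} (hp : DifferentiableOn ℂ p (ball 0 1))
    (hp0 : ∀ z ∈ ball (0 : ℂ) 1, p z ≠ 0) (h1 : p 0 = 1) :
    ∃ σ : ℂ → ℂ, DifferentiableOn ℂ σ (ball 0 1) ∧ σ 0 = 1 ∧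
      (∀ z ∈ ball (0 : ℂ) 1, σ z ^ 2 * p z = 1) ∧ deriv σ 0 = -deriv p 0 / 2 := by
  have hz0 : (0 : ℂ) ∈ ball (0 : ℂ) 1 := mem_ball_self one_pos
  have hg : DifferentiableOn ℂ (fun z => deriv p z / p z) (ball 0 1) :=
    (hp.deriv isOpen_ball).div hp hp0
  obtain ⟨l, hl⟩ := hg.isConservativeOn.isExactOn_ball hg.continuousOn
  have hσd : ∀ z ∈ ball (0 : ℂ) 1, HasDerivAt (fun z => Complex.exp (-(l z - l 0) / 2))
      (Complex.exp (-(l z - l 0) / 2) * (-(deriv p z / p z) / 2)) z := by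
    intro z hz
    exact ((((hl z hz).sub_const (l 0)).neg).div_const 2).cexp
  refine ⟨fun z => Complex.exp (-(l z - l 0) / 2), fun z hz =>
    (hσd z hz).differentiableAt.differentiableWithinAt, by simp, ?_, ?_⟩
  · have hd : ∀ z ∈ ball (0 : ℂ) 1,
        HasDerivAt (fun z => Complex.exp (-(l z - l 0) / 2) ^ 2 * p z) 0 z := by
      intro z hz
      have hpd := (hp.differentiableAt (isOpen_ball.mem_nhds hz)).hasDerivAt
      refine (((hσd z hz).pow 2).mul hpd).congr_deriv ?_
      have := hp0 z hz
      simp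
      field_simp
      ring
    intro z hz
    have := isOpen_ball.is_const_of_deriv_eq_zero (convex_ball (0 : ℂ) 1).isPreconnected
      (fun z hz => (hd z hz).differentiableAt.differentiableWithinAt)
      (fun z hz => (hd z hz).deriv) hz hz0
    simpa [h1] using this
  · rw [(hσd 0 hz0).deriv]
    simp [h1]

theorem gt_bieb1 {f : ℂ → ℂ} (hf : DifferentiableOn ℂ f (ball 0 1)) (hi : InjOn f (ball 0 1))
    (h0 : f 0 = 0) (h1 : deriv f 0 = 1) : ‖deriv (deriv f) 0‖ ≤ 4 := by
  have hz0 : (0 : ℂ) ∈ ball (0 : ℂ) 1 := mem_ball_self one_pos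
  have hnh : ball (0 : ℂ) 1 ∈ nhds (0 : ℂ) := ball_mem_nhds 0 one_pos
  set p : ℂ → ℂ := dslope f 0 with hp
  have hpd : DifferentiableOn ℂ p (ball 0 1) := (Complex.differentiableOn_dslope hnh).mpr hf
  have hfp : ∀ z, f z = z * p z := by
    intro z
    have := sub_smul_dslope f 0 z
    simp only [sub_zero, smul_eq_mul, h0] at this
    exact this.symm
  have hp1 : p 0 = 1 := by rw [hp, dslope_same, h1]
  have hp0 : ∀ z ∈ ball (0 : ℂ) 1, p z ≠ 0 := by
    intro z hz hpz
    have : z = 0 := hi hz hz0 (by rw [hfp z, hpz, h0, mul_zero])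
    rw [this, hp1] at hpz
    exact one_ne_zero hpz
  obtain ⟨σ, hσd, hσ0, hσ, hσ'⟩ := gt_invsqrt hpd hp0 hp1
  set M : ℂ → ℂ := dslope (dslope σ 0) 0 with hM
  have hMd : DifferentiableOn ℂ M (ball 0 1) :=
    (Complex.differentiableOn_dslope hnh).mpr ((Complex.differentiableOn_dslope hnh).mpr hσd)
  have hσM : ∀ y, σ y = 1 + deriv σ 0 * y + y ^ 2 * M y := by
    intro y
    have e1 := sub_smul_dslope σ 0 y
    have e2 := sub_smul_dslope (dslope σ 0) 0 y
    simp only [sub_zero, smul_eq_mul, dslope_same, hσ0] at e1 e2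
    linear_combination (-1 : ℂ) * e1 - y * e2
  have hsq : ∀ z ∈ ball (0 : ℂ) 1, z ^ 2 ∈ ball (0 : ℂ) 1 := by
    intro z hz
    simp only [mem_ball_zero_iff, norm_pow] at hz ⊢
    exact pow_lt_one₀ (norm_nonneg z) hz two_ne_zero
  have hq : ∀ z, 1 + deriv σ 0 * z ^ 2 + z ^ 3 * (z * M (z ^ 2)) = σ (z ^ 2) := by
    intro z; rw [hσM]; ring
  have hσne : ∀ z ∈ ball (0 : ℂ) 1, σ z ≠ 0 := by
    intro z hz h
    have := hσ z hz
    simp [h] at this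
  have hKd : DifferentiableOn ℂ (fun z => z * M (z ^ 2)) (ball 0 1) :=
    differentiableOn_id.mul (hMd.comp (by fun_prop) hsq)
  have hb : ‖deriv σ 0‖ ≤ 1 := by
    apply gt_area hKd
    · intro z hz
      rw [hq]; exact hσne _ (hsq z hz)
    · simp only [hq]
      have hsqf : ∀ z ∈ ball (0 : ℂ) 1, (z / σ (z ^ 2)) ^ 2 = f (z ^ 2) := by
        intro z hz
        have hs := hσ _ (hsq z hz)
        have hn := hσne _ (hsq z hz)
        rw [hfp]
        field_simp
        linear_combination (-z ^ 2) * hs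
      intro x hx y hy hxy
      simp only at hxy
      have h2 : x ^ 2 = y ^ 2 := by
        apply hi (hsq x hx) (hsq y hy)
        rw [← hsqf x hx, ← hsqf y hy, hxy]
      rw [h2] at hxy
      have hn := hσne _ (hsq y hy)
      field_simp at hxy
      exact hxy
  have hp2 : ‖deriv p 0‖ ≤ 2 := by
    rw [hσ', norm_div, norm_neg] at hb
    have : ‖(2 : ℂ)‖ = 2 := by simp
    rw [this] at hb
    linarith
  have hev : deriv f =ᶠ[nhds 0] fun z => p z + z * deriv p z := by
    filter_upwards [hnh] with z hz
    have hfe : f = fun z => z * p z := funext hfp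
    have := (hasDerivAt_id z).mul (hpd.differentiableAt (isOpen_ball.mem_nhds hz)).hasDerivAt
    rw [hfe]
    refine (this.congr_deriv ?_).deriv
    simp
  have hdd : deriv (deriv f) 0 = 2 * deriv p 0 := by
    rw [hev.deriv_eq]
    have h3 := (hpd.differentiableAt hnh).hasDerivAt
    have h4 := ((hpd.deriv isOpen_ball).differentiableAt hnh).hasDerivAt
    refine ((h3.add ((hasDerivAt_id (0 : ℂ)).mul h4)).congr_deriv ?_).deriv
    simp; ring
  rw [hdd, norm_mul]
  have : ‖(2 : ℂ)‖ = 2 := by simp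
  rw [this]; linarith

theorem gt_bieb {f : ℂ → ℂ} (hf : DifferentiableOn ℂ f (ball 0 1)) (hi : InjOn f (ball 0 1))
    (h1 : deriv f 0 ≠ 0) : ‖deriv (deriv f) 0‖ ≤ 4 * ‖deriv f 0‖ := by
  set a := deriv f 0 with ha
  have hd : deriv (fun z => (f z - f 0) / a) = fun z => deriv f z / a := by
    funext z; simp
  have := gt_bieb1 (f := fun z => (f z - f 0) / a) ((hf.sub_const _).div_const _) (by
    intro x hx y hy hxy
    apply hi hx hy
    simp only at hxy
    field_simp at hxy
    linear_combination hxy) (by simp) (by rw [hd]; simp [← ha, h1])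
  rw [hd] at this
  simp only [deriv_div_const, norm_div] at this
  rwa [div_le_iff₀ (norm_pos_iff.mpr h1)] at this

theorem gt_koebe {f : ℂ → ℂ} (hf : DifferentiableOn ℂ f (ball 0 1)) (hi : InjOn f (ball 0 1))
    {a : ℂ} (ha : a ∈ ball (0 : ℂ) 1) (hfa : deriv f a ≠ 0) :
    ‖(1 - ‖a‖ ^ 2 : ℂ) * deriv (deriv f) a - 2 * (starRingEnd ℂ) a * deriv f a‖
      ≤ 4 * ‖deriv f a‖ := by
  have ha1 : ‖a‖ < 1 := by simpa using ha
  have hδ : 0 < 1 - ‖a‖ ^ 2 := by nlinarith [norm_nonneg a]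
  have hnh : ball (0 : ℂ) 1 ∈ nhds (0 : ℂ) := ball_mem_nhds 0 one_pos
  have hz0 : (0 : ℂ) ∈ ball (0 : ℂ) 1 := mem_ball_self one_pos
  set c := (starRingEnd ℂ) a with hc
  have hac : a * c = (‖a‖ : ℂ) ^ 2 := by
    rw [hc, Complex.mul_conj, Complex.normSq_eq_norm_sq]; simp
  have hden : ∀ z ∈ ball (0 : ℂ) 1, 1 + c * z ≠ 0 := by
    intro z hz h
    have h2 : ‖c * z‖ = 1 := by
      rw [show c * z = -1 by linear_combination h]; simp
    rw [norm_mul, hc, RCLike.norm_conj] at h2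
    have : ‖z‖ < 1 := by simpa using hz
    nlinarith [norm_nonneg a, norm_nonneg z]
  set m : ℂ → ℂ := fun z => (z + a) / (1 + c * z) with hm
  have hmaps : ∀ z ∈ ball (0 : ℂ) 1, m z ∈ ball (0 : ℂ) 1 := by
    intro z hz
    have hz1 : ‖z‖ < 1 := by simpa using hz
    rw [mem_ball_zero_iff, hm]
    simp only
    rw [norm_div, div_lt_one (norm_pos_iff.mpr (hden z hz))]
    apply lt_of_pow_lt_pow_left₀ 2 (norm_nonneg _)
    have hzs : ‖z‖ ^ 2 < 1 := by nlinarith [norm_nonneg z]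
    have hprod : 0 < (1 - ‖a‖ ^ 2) * (1 - ‖z‖ ^ 2) := mul_pos hδ (by linarith)
    simp only [← Complex.normSq_eq_norm_sq, Complex.normSq_apply, hc] at hprod ⊢
    simp
    nlinarith
  have hmd : ∀ z ∈ ball (0 : ℂ) 1, HasDerivAt m ((1 - ‖a‖ ^ 2 : ℂ) / (1 + c * z) ^ 2) z := by
    intro z hz
    have h1 : HasDerivAt (fun z : ℂ => 1 + c * z) c z := by
      simpa using ((hasDerivAt_id z).const_mul c).const_add 1
    refine (((hasDerivAt_id z).add_const a).div h1 (hden z hz)).congr_deriv ?_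
    simp only [id]
    rw [← hac]; ring
  have hmi : InjOn m (ball 0 1) := by
    intro x hx y hy hxy
    simp only [hm] at hxy
    rw [div_eq_div_iff (hden x hx) (hden y hy)] at hxy
    have h3 : (1 - ‖a‖ ^ 2 : ℂ) * (x - y) = 0 := by rw [← hac]; linear_combination hxy
    have h4 : (1 - ‖a‖ ^ 2 : ℂ) ≠ 0 := by exact_mod_cast hδ.ne'
    exact sub_eq_zero.mp ((mul_eq_zero.mp h3).resolve_left h4)
  have hm0 : m 0 = a := by simp [hm]
  have hFd : ∀ z ∈ ball (0 : ℂ) 1, HasDerivAt (fun z => f (m z))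
      (deriv f (m z) * ((1 - ‖a‖ ^ 2 : ℂ) / (1 + c * z) ^ 2)) z := by
    intro z hz
    exact ((hf.differentiableAt (isOpen_ball.mem_nhds (hmaps z hz))).hasDerivAt).comp z (hmd z hz)
  have hF0 : deriv (fun z => f (m z)) 0 = deriv f a * (1 - ‖a‖ ^ 2 : ℂ) := by
    rw [(hFd 0 hz0).deriv, hm0]; simp
  have hFF : deriv (deriv (fun z => f (m z))) 0 = (1 - ‖a‖ ^ 2 : ℂ) *
      ((1 - ‖a‖ ^ 2 : ℂ) * deriv (deriv f) a - 2 * c * deriv f a) := by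
    have hev : deriv (fun z => f (m z)) =ᶠ[nhds 0]
        fun z => deriv f (m z) * ((1 - ‖a‖ ^ 2 : ℂ) / (1 + c * z) ^ 2) := by
      filter_upwards [hnh] with z hz using (hFd z hz).deriv
    rw [hev.deriv_eq]
    have h5 : HasDerivAt (fun z => deriv f (m z))
        (deriv (deriv f) a * (1 - ‖a‖ ^ 2 : ℂ)) 0 := by
      have h6 := (((hf.deriv isOpen_ball).differentiableAt
        (isOpen_ball.mem_nhds (hmaps 0 hz0))).hasDerivAt).comp 0 (hmd 0 hz0)
      refine h6.congr_deriv ?_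
      rw [hm0]; simp
    have h1 : HasDerivAt (fun z : ℂ => 1 + c * z) c 0 := by
      simpa using ((hasDerivAt_id (0 : ℂ)).const_mul c).const_add 1
    have h7 : HasDerivAt (fun z : ℂ => (1 - ‖a‖ ^ 2 : ℂ) / (1 + c * z) ^ 2)
        (-2 * c * (1 - ‖a‖ ^ 2 : ℂ)) 0 := by
      refine ((hasDerivAt_const (0 : ℂ) (1 - ‖a‖ ^ 2 : ℂ)).div (h1.pow 2) (by simp)).congr_deriv ?_
      simp; ring
    refine ((h5.mul h7).congr_deriv ?_).deriv
    rw [hm0]; simp; ring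
  have hB := gt_bieb (f := fun z => f (m z))
    (fun z hz => (hFd z hz).differentiableAt.differentiableWithinAt)
    (fun x hx y hy hxy => hmi hx hy (hi (hmaps x hx) (hmaps y hy) hxy))
    (by rw [hF0]; exact mul_ne_zero hfa (by exact_mod_cast hδ.ne'))
  have hn : ‖(1 - ‖a‖ ^ 2 : ℂ)‖ = 1 - ‖a‖ ^ 2 := by
    rw [show (1 - ‖a‖ ^ 2 : ℂ) = ((1 - ‖a‖ ^ 2 : ℝ) : ℂ) by push_cast; ring]
    rw [Complex.norm_real, Real.norm_of_nonneg hδ.le]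
  rw [hFF, hF0, norm_mul, norm_mul (deriv f a), hn] at hB
  refine le_of_mul_le_mul_left (hB.trans (le_of_eq ?_)) hδ
  ring

/-- Derivative of the squared norm of the derivative of f along a ray, with the bounds from the Koebe transform. -/
theorem gt_ray {f : ℂ → ℂ} (hf : DifferentiableOn ℂ f (ball 0 1)) (hi : InjOn f (ball 0 1))
    (hd : ∀ z ∈ ball (0 : ℂ) 1, deriv f z ≠ 0) {u : ℂ} (hu : ‖u‖ = 1) {r : ℝ} (hr0 : 0 ≤ r)
    (hr : r < 1) : ∃ Y : ℝ, HasDerivAt (fun r : ℝ => ‖deriv f (r * u)‖ ^ 2) (2 * Y) r ∧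
      (1 - r ^ 2) * Y ≤ (2 * r + 4) * ‖deriv f (r * u)‖ ^ 2 ∧
      (2 * r - 4) * ‖deriv f (r * u)‖ ^ 2 ≤ (1 - r ^ 2) * Y := by
  have hn : ‖(r * u : ℂ)‖ = r := by simp [hu, abs_of_nonneg hr0]
  have hb : (r * u : ℂ) ∈ ball (0 : ℂ) 1 := by rw [mem_ball_zero_iff, hn]; exact hr
  have h2 := ((hf.deriv isOpen_ball).differentiableAt (isOpen_ball.mem_nhds hb)).hasDerivAt
  have h3 : HasDerivAt (fun z : ℂ => deriv f (z * u)) (deriv (deriv f) (r * u) * u) (r : ℂ) := by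
    have h4 : HasDerivAt (fun z : ℂ => z * u) u (r : ℂ) := by
      simpa using (hasDerivAt_id (r : ℂ)).mul_const u
    exact HasDerivAt.comp (r : ℂ) h2 h4
  have h5 := h3.comp_ofReal.norm_sq
  refine ⟨_, h5, ?_⟩
  have hk := gt_koebe hf hi hb (hd _ hb)
  rw [hn] at hk
  have huu : u * (starRingEnd ℂ) u = 1 := by
    rw [Complex.mul_conj, Complex.normSq_eq_norm_sq, hu]; simp
  set P := deriv f (r * u)
  set Q := deriv (deriv f) (r * u)
  have hk2 : ‖(1 - r ^ 2 : ℂ) * (Q * u) - 2 * r * P‖ ≤ 4 * ‖P‖ := by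
    have : (1 - r ^ 2 : ℂ) * (Q * u) - 2 * r * P =
        u * ((1 - r ^ 2 : ℂ) * Q - 2 * (starRingEnd ℂ) (r * u) * P) := by
      simp only [map_mul, Complex.conj_ofReal]
      linear_combination (2 * r * P) * huu
    rw [this, norm_mul, hu, one_mul]; exact hk
  have hin := abs_real_inner_le_norm P ((1 - r ^ 2 : ℂ) * (Q * u) - 2 * r * P)
  have hin2 : inner ℝ P ((1 - r ^ 2 : ℂ) * (Q * u) - 2 * r * P) =
      (1 - r ^ 2) * inner ℝ P (Q * u) - 2 * r * ‖P‖ ^ 2 := by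
    have e : (1 - r ^ 2 : ℂ) * (Q * u) - 2 * r * P = (1 - r ^ 2 : ℝ) • (Q * u) - (2 * r : ℝ) • P := by
      simp only [Complex.real_smul]; push_cast; ring
    rw [e, inner_sub_right, real_inner_smul_right, real_inner_smul_right, real_inner_self_eq_norm_sq]
  rw [hin2] at hin
  have hle : ‖P‖ * ‖(1 - r ^ 2 : ℂ) * (Q * u) - 2 * r * P‖ ≤ 4 * ‖P‖ ^ 2 := by
    nlinarith [mul_le_mul_of_nonneg_left hk2 (norm_nonneg P)]
  have := abs_le.mp (hin.trans hle)
  constructor <;> linarith [this.1, this.2]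

theorem gt_dist_upper {f : ℂ → ℂ} (hf : DifferentiableOn ℂ f (ball 0 1)) (hi : InjOn f (ball 0 1))
    (hd : ∀ z ∈ ball (0 : ℂ) 1, deriv f z ≠ 0) (h1 : deriv f 0 = 1) {u : ℂ} (hu : ‖u‖ = 1) {r : ℝ}
    (hr0 : 0 ≤ r) (hr : r < 1) : ‖deriv f (r * u)‖ ≤ (1 + r) / (1 - r) ^ 3 := by
  have hder : ∀ s ∈ Ico (0 : ℝ) 1, ∃ y ≤ 0, HasDerivAt
      (fun r : ℝ => ‖deriv f (r * u)‖ ^ 2 * ((1 - r) ^ 6 / (1 + r) ^ 2)) y s := by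
    intro s hs
    obtain ⟨Y, hY, hY1, -⟩ := gt_ray hf hi hd hu hs.1 hs.2
    have p1 : 0 < 1 + s := by linarith [hs.1]
    have p2 : 0 < 1 - s := by linarith [hs.2]
    have d1 : HasDerivAt (fun r : ℝ => 1 + r) 1 s := (hasDerivAt_id s).const_add 1
    have d2 : HasDerivAt (fun r : ℝ => 1 - r) (-1) s := (hasDerivAt_id s).const_sub 1
    refine ⟨_, ?_, hY.mul ((d2.pow 6).div (d1.pow 2) (by positivity))⟩
    have e : 2 * Y * ((1 - s) ^ 6 / (1 + s) ^ 2) + ‖deriv f (s * u)‖ ^ 2 *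
        (((6 : ℕ) * (1 - s) ^ (6 - 1) * (-1) * (1 + s) ^ 2 - (1 - s) ^ 6 * ((2 : ℕ) * (1 + s) ^ (2 - 1) * 1)) /
          ((1 + s) ^ 2) ^ 2) = 2 * ((1 - s) ^ 5 / (1 + s) ^ 3) *
          ((1 - s ^ 2) * Y - (2 * s + 4) * ‖deriv f (s * u)‖ ^ 2) := by
      push_cast
      field_simp
      ring
    refine le_trans (le_of_eq e) ?_
    exact mul_nonpos_of_nonneg_of_nonpos (by positivity) (by linarith)
  have hanti : AntitoneOn (fun r : ℝ => ‖deriv f (r * u)‖ ^ 2 * ((1 - r) ^ 6 / (1 + r) ^ 2)) (Ico 0 1) := by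
    apply antitoneOn_of_deriv_nonpos (convex_Ico 0 1)
    · intro s hs
      obtain ⟨y, -, hy⟩ := hder s hs
      exact hy.continuousAt.continuousWithinAt
    · intro s hs
      rw [interior_Ico] at hs
      obtain ⟨y, -, hy⟩ := hder s (Ioo_subset_Ico_self hs)
      exact hy.differentiableAt.differentiableWithinAt
    · intro s hs
      rw [interior_Ico] at hs
      obtain ⟨y, hy0, hy⟩ := hder s (Ioo_subset_Ico_self hs)
      rw [hy.deriv]; exact hy0
  have := hanti (left_mem_Ico.mpr one_pos) ⟨hr0, hr⟩ hr0
  simp [h1] at this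
  have p1 : 0 < 1 + r := by linarith
  have p2 : 0 < 1 - r := by linarith
  refine le_of_sq_le_sq ?_ (by positivity)
  rw [← mul_div_assoc, div_le_one (by positivity)] at this
  rw [div_pow, le_div_iff₀ (by positivity)]
  calc _ = ‖deriv f (r * u)‖ ^ 2 * (1 - r) ^ 6 := by ring
    _ ≤ _ := this

theorem gt_dist_lower {f : ℂ → ℂ} (hf : DifferentiableOn ℂ f (ball 0 1)) (hi : InjOn f (ball 0 1))
    (hd : ∀ z ∈ ball (0 : ℂ) 1, deriv f z ≠ 0) (h1 : deriv f 0 = 1) {u : ℂ} (hu : ‖u‖ = 1) {r : ℝ}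
    (hr0 : 0 ≤ r) (hr : r < 1) : (1 - r) / (1 + r) ^ 3 ≤ ‖deriv f (r * u)‖ := by
  have hder : ∀ s ∈ Ico (0 : ℝ) 1, ∃ y ≥ 0, HasDerivAt
      (fun r : ℝ => ‖deriv f (r * u)‖ ^ 2 * ((1 + r) ^ 6 / (1 - r) ^ 2)) y s := by
    intro s hs
    obtain ⟨Y, hY, -, hY1⟩ := gt_ray hf hi hd hu hs.1 hs.2
    have p1 : 0 < 1 + s := by linarith [hs.1]
    have p2 : 0 < 1 - s := by linarith [hs.2]
    have d1 : HasDerivAt (fun r : ℝ => 1 + r) 1 s := (hasDerivAt_id s).const_add 1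
    have d2 : HasDerivAt (fun r : ℝ => 1 - r) (-1) s := (hasDerivAt_id s).const_sub 1
    refine ⟨_, ?_, hY.mul ((d1.pow 6).div (d2.pow 2) (by positivity))⟩
    have e : 2 * Y * ((1 + s) ^ 6 / (1 - s) ^ 2) + ‖deriv f (s * u)‖ ^ 2 *
        (((6 : ℕ) * (1 + s) ^ (6 - 1) * 1 * (1 - s) ^ 2 - (1 + s) ^ 6 * ((2 : ℕ) * (1 - s) ^ (2 - 1) * (-1))) /
          ((1 - s) ^ 2) ^ 2) = 2 * ((1 + s) ^ 5 / (1 - s) ^ 3) *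
          ((1 - s ^ 2) * Y - (2 * s - 4) * ‖deriv f (s * u)‖ ^ 2) := by
      push_cast
      field_simp
      ring
    refine ge_trans (ge_of_eq e) ?_
    exact mul_nonneg (by positivity) (by linarith)
  have hmono : MonotoneOn (fun r : ℝ => ‖deriv f (r * u)‖ ^ 2 * ((1 + r) ^ 6 / (1 - r) ^ 2)) (Ico 0 1) := by
    apply monotoneOn_of_deriv_nonneg (convex_Ico 0 1)
    · intro s hs
      obtain ⟨y, -, hy⟩ := hder s hs
      exact hy.continuousAt.continuousWithinAt
    · intro s hs
      rw [interior_Ico] at hs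
      obtain ⟨y, -, hy⟩ := hder s (Ioo_subset_Ico_self hs)
      exact hy.differentiableAt.differentiableWithinAt
    · intro s hs
      rw [interior_Ico] at hs
      obtain ⟨y, hy0, hy⟩ := hder s (Ioo_subset_Ico_self hs)
      rw [hy.deriv]; exact hy0
  have := hmono (left_mem_Ico.mpr one_pos) ⟨hr0, hr⟩ hr0
  simp [h1] at this
  have p1 : 0 < 1 + r := by linarith
  have p2 : 0 < 1 - r := by linarith
  refine le_of_sq_le_sq ?_ (by positivity)
  rw [← mul_div_assoc, one_le_div (by positivity)] at this
  rw [div_pow, div_le_iff₀ (by positivity)]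
  calc _ ≤ ‖deriv f (r * u)‖ ^ 2 * (1 + r) ^ 6 := this
    _ = _ := by ring

theorem gt_growth_upper {f : ℂ → ℂ} (hf : DifferentiableOn ℂ f (ball 0 1)) (hi : InjOn f (ball 0 1))
    (hd : ∀ z ∈ ball (0 : ℂ) 1, deriv f z ≠ 0) (h0 : f 0 = 0) (h1 : deriv f 0 = 1)
    {r : ℝ} (hr0 : 0 ≤ r) (hr : r < 1) : ‖f r‖ ≤ r / (1 - r) ^ 2 := by
  have hfd : ∀ s ∈ Icc (0 : ℝ) r, HasDerivAt (fun s : ℝ => f s) (deriv f s) s := by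
    intro s hs
    have hb : (s : ℂ) ∈ ball (0 : ℂ) 1 := by
      simp [abs_of_nonneg hs.1]; linarith [hs.2]
    exact ((hf.differentiableAt (isOpen_ball.mem_nhds hb)).hasDerivAt).comp_ofReal
  have hBd : ∀ s ∈ Icc (0 : ℝ) r, HasDerivAt (fun s : ℝ => s / (1 - s) ^ 2) ((1 + s) / (1 - s) ^ 3) s := by
    intro s hs
    have p2 : 0 < 1 - s := by linarith [hs.2]
    have d2 : HasDerivAt (fun r : ℝ => 1 - r) (-1) s := (hasDerivAt_id s).const_sub 1
    have d3 : HasDerivAt (fun r : ℝ => (1 - r) ^ 2) (2 * (1 - s) * (-1)) s :=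
      (d2.pow 2).congr_deriv (by norm_num)
    have hne : (1 - s) ^ 2 ≠ 0 := by positivity
    have hne1 : 1 - s ≠ 0 := by positivity
    refine ((hasDerivAt_id s).div d3 hne).congr_deriv ?_
    simp only [id]
    field_simp
    ring
  refine image_norm_le_of_norm_deriv_right_le_deriv_boundary' (f := fun s : ℝ => f s)
    (f' := fun s : ℝ => deriv f s) (a := 0) (b := r)
    (B := fun s : ℝ => s / (1 - s) ^ 2) (B' := fun s : ℝ => (1 + s) / (1 - s) ^ 3)
    (fun s hs => (hfd s hs).continuousAt.continuousWithinAt)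
    (fun s hs => (hfd s (Ico_subset_Icc_self hs)).hasDerivWithinAt) (by simp [h0])
    (fun s hs => (hBd s hs).continuousAt.continuousWithinAt)
    (fun s hs => (hBd s (Ico_subset_Icc_self hs)).hasDerivWithinAt) ?_ (right_mem_Icc.mpr hr0)
  intro s hs
  have := gt_dist_upper hf hi hd h1 (u := 1) (by simp) hs.1 (hs.2.trans hr)
  simpa using this

theorem gt_growth_lower {f : ℂ → ℂ} (hf : DifferentiableOn ℂ f (ball 0 1)) (hi : InjOn f (ball 0 1))
    (hd : ∀ z ∈ ball (0 : ℂ) 1, deriv f z ≠ 0) (h0 : f 0 = 0) (h1 : deriv f 0 = 1)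
    {z : ℂ} (hz : z ∈ ball (0 : ℂ) 1) : ‖z‖ / (1 + ‖z‖) ^ 2 ≤ ‖f z‖ := by
  have hz0 : (0 : ℂ) ∈ ball (0 : ℂ) 1 := mem_ball_self one_pos
  rcases eq_or_ne z 0 with rfl | hzne
  · simp [h0]
  have hzpos : 0 < ‖z‖ := norm_pos_iff.mpr hzne
  have hz1 : ‖z‖ < 1 := by simpa using hz
  obtain ⟨z₁, hz₁, hmin⟩ := (isCompact_sphere (0 : ℂ) ‖z‖).exists_isMinOn ⟨z, by simp⟩
    (hf.continuousOn.norm.mono (sphere_subset_closedBall.trans (closedBall_subset_ball hz1)))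
  have hz₁n : ‖z₁‖ = ‖z‖ := by simpa using hz₁
  have hz₁b : z₁ ∈ ball (0 : ℂ) 1 := by rw [mem_ball_zero_iff, hz₁n]; exact hz1
  have hle : ‖f z₁‖ ≤ ‖f z‖ := hmin (by simp : z ∈ sphere (0 : ℂ) ‖z‖)
  refine le_trans ?_ hle
  rw [← hz₁n]
  set w := f z₁ with hw
  have hwne : w ≠ 0 := by
    intro h
    have : z₁ = 0 := hi hz₁b hz0 (by rw [← hw, h, h0])
    rw [this, norm_zero] at hz₁n
    linarith
  have hwpos : 0 < ‖w‖ := norm_pos_iff.mpr hwne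
  have hseg : ∀ t : ℝ, 0 ≤ t → t ≤ 1 → ∃ y ∈ ball (0 : ℂ) 1, f y = t * w := by
    intro t ht0 ht1
    rcases eq_or_lt_of_le ht1 with rfl | hlt
    · exact ⟨z₁, hz₁b, by simp [hw]⟩
    · obtain ⟨y, hy, he⟩ := gt_segment hf hi h0 hzpos hz1 (t * w) (by
        intro s hs0 hs1 y hy he
        have h3 : ‖w‖ ≤ ‖f y‖ := hmin (by simpa using hy)
        rw [he, norm_mul, norm_mul, Complex.norm_real, Complex.norm_real, Real.norm_of_nonneg hs0,
          Real.norm_of_nonneg ht0] at h3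
        have : s * (t * ‖w‖) ≤ t * ‖w‖ := mul_le_of_le_one_left (by positivity) hs1
        nlinarith) 1 zero_le_one le_rfl
      exact ⟨y, ball_subset_ball hz1.le hy, by simpa using he⟩
  set h : ℂ → ℂ := Function.invFunOn f (ball 0 1) with hh
  have hleft : ∀ y ∈ ball (0 : ℂ) 1, h (f y) = y := fun y hy => hi.leftInvOn_invFunOn hy
  have hder : ∀ y ∈ ball (0 : ℂ) 1, HasDerivAt h (deriv f y)⁻¹ (f y) := by
    intro y hy
    have hs : HasStrictDerivAt f (deriv f y) y :=
      (hf.analyticAt (isOpen_ball.mem_nhds hy)).hasStrictDerivAt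
    refine (hs.to_local_left_inverse (hd y hy) ?_).hasDerivAt
    filter_upwards [isOpen_ball.mem_nhds hy] with x hx using hleft x hx
  have hγ : ∀ t ∈ Icc (0 : ℝ) 1, h (t * w) ∈ ball (0 : ℂ) 1 ∧ f (h (t * w)) = t * w ∧
      HasDerivAt (fun t : ℝ => h (t * w)) ((deriv f (h (t * w)))⁻¹ * w) t := by
    intro t ht
    obtain ⟨y, hy, he⟩ := hseg t ht.1 ht.2
    have e1 : h (t * w) = y := by rw [← he, hleft y hy]
    rw [e1]
    refine ⟨hy, he, ?_⟩
    have h4 : HasDerivAt (fun z : ℂ => z * w) w (t : ℂ) := by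
      simpa using (hasDerivAt_id (t : ℂ)).mul_const w
    have h5 := hder y hy
    rw [he] at h5
    exact (HasDerivAt.comp (t : ℂ) h5 h4).comp_ofReal
  have hkd : ∀ s : ℝ, 0 ≤ s → HasDerivAt (fun s : ℝ => s / (1 + s) ^ 2) ((1 - s) / (1 + s) ^ 3) s := by
    intro s hs
    have d2 : HasDerivAt (fun r : ℝ => 1 + r) 1 s := (hasDerivAt_id s).const_add 1
    have d3 : HasDerivAt (fun r : ℝ => (1 + r) ^ 2) (2 * (1 + s) * 1) s :=
      (d2.pow 2).congr_deriv (by norm_num)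
    have hne : (1 + s) ^ 2 ≠ 0 := by positivity
    have hne1 : 1 + s ≠ 0 := by positivity
    refine ((hasDerivAt_id s).div d3 hne).congr_deriv ?_
    simp only [id]
    field_simp
    ring
  have hPd : ∀ t ∈ Ioo (0 : ℝ) 1, ∃ y ≤ 0, HasDerivAt
      (fun t : ℝ => ‖h (t * w)‖ / (1 + ‖h (t * w)‖) ^ 2 - t * ‖w‖) y t := by
    intro t ht
    obtain ⟨hb, he, hg⟩ := hγ t (Ioo_subset_Icc_self ht)
    set y := h (t * w) with hy
    have hyne : y ≠ 0 := by
      intro h6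
      rw [h6, h0] at he
      have : (t : ℂ) ≠ 0 := by exact_mod_cast ht.1.ne'
      exact (mul_ne_zero this hwne) he.symm
    have hypos : 0 < ‖y‖ := norm_pos_iff.mpr hyne
    have hy1 : ‖y‖ < 1 := by simpa using hb
    have hnd : HasDerivAt (fun t : ℝ => ‖h (t * w)‖)
        (inner ℝ y ((deriv f y)⁻¹ * w) / ‖y‖) t := by
      have h7 := hg.norm_sq.sqrt (by rw [← hy]; positivity)
      have h8 : (fun t : ℝ => Real.sqrt (‖h (t * w)‖ ^ 2)) = fun t : ℝ => ‖h (t * w)‖ := by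
        funext s; exact Real.sqrt_sq (norm_nonneg _)
      rw [h8] at h7
      refine h7.congr_deriv ?_
      rw [← hy, Real.sqrt_sq (norm_nonneg _)]
      field_simp
    have hcomp := (HasDerivAt.comp t (hkd ‖y‖ hypos.le) hnd).sub ((hasDerivAt_id t).mul_const ‖w‖)
    refine ⟨_, ?_, hcomp⟩
    have hin : inner ℝ y ((deriv f y)⁻¹ * w) / ‖y‖ ≤ ‖w‖ / ‖deriv f y‖ := by
      rw [div_le_iff₀ hypos]
      refine (real_inner_le_norm _ _).trans (le_of_eq ?_)
      rw [norm_mul, norm_inv]; ring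
    have hdl : (1 - ‖y‖) / (1 + ‖y‖) ^ 3 ≤ ‖deriv f y‖ := by
      have := gt_dist_lower hf hi hd h1 (u := y / ‖y‖) (by simp [hyne]) hypos.le hy1
      have e : (‖y‖ : ℂ) * (y / ‖y‖) = y := by
        have : (‖y‖ : ℂ) ≠ 0 := by exact_mod_cast hypos.ne'
        field_simp
      rwa [e] at this
    have hdp : 0 < ‖deriv f y‖ := norm_pos_iff.mpr (hd y hb)
    have hk0 : 0 ≤ (1 - ‖y‖) / (1 + ‖y‖) ^ 3 := div_nonneg (by linarith) (by positivity)
    have : (1 - ‖y‖) / (1 + ‖y‖) ^ 3 * (inner ℝ y ((deriv f y)⁻¹ * w) / ‖y‖) ≤ ‖w‖ := by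
      calc _ ≤ (1 - ‖y‖) / (1 + ‖y‖) ^ 3 * (‖w‖ / ‖deriv f y‖) := by gcongr
        _ ≤ ‖deriv f y‖ * (‖w‖ / ‖deriv f y‖) := by gcongr
        _ = ‖w‖ := by field_simp
    linarith
  have hanti : AntitoneOn (fun t : ℝ => ‖h (t * w)‖ / (1 + ‖h (t * w)‖) ^ 2 - t * ‖w‖) (Icc 0 1) := by
    apply antitoneOn_of_deriv_nonpos (convex_Icc 0 1)
    · intro t ht
      have hc : ContinuousAt (fun t : ℝ => ‖h (t * w)‖) t := (hγ t ht).2.2.continuousAt.norm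
      apply ContinuousAt.continuousWithinAt
      refine (hc.div ((continuousAt_const.add hc).pow 2) ?_).sub
        (continuousAt_id.mul continuousAt_const)
      show (1 + ‖h (t * w)‖) ^ 2 ≠ 0
      positivity
    · intro s hs
      rw [interior_Icc] at hs
      obtain ⟨y, -, hy⟩ := hPd s hs
      exact hy.differentiableAt.differentiableWithinAt
    · intro s hs
      rw [interior_Icc] at hs
      obtain ⟨y, hy0, hy⟩ := hPd s hs
      rw [hy.deriv]; exact hy0
  have hfin := hanti (left_mem_Icc.mpr zero_le_one) (right_mem_Icc.mpr zero_le_one) zero_le_one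
  have e0 : h 0 = 0 := by rw [← h0, hleft 0 hz0, h0]
  have e1 : h w = z₁ := hleft z₁ hz₁b
  simp [e0, e1] at hfin
  linarith

/-- **Growth theorem.** Let `F(x) = f(x)·x` be biholomorphic on the unit ball `𝔹` of a
complex Banach space, with `f` holomorphic and `f(0) = 1`. Then for all `x ∈ 𝔹`,
`‖x‖/(1+‖x‖)² ≤ ‖F(x)‖ ≤ ‖x‖/(1−‖x‖)²`. -/
theorem stmt6 {X : Type*} [NormedAddCommGroup X] [NormedSpace ℂ X] [CompleteSpace X]
    (f : X → ℂ) (hf : DifferentiableOn ℂ f (ball (0 : X) 1)) (hf0 : f 0 = 1)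
    (F : X → X) (hF : ∀ x ∈ ball (0 : X) 1, F x = f x • x)
    (hbi : IsBiholoOn F (ball (0 : X) 1)) :
    ∀ x ∈ ball (0 : X) 1,
      ‖x‖ / (1 + ‖x‖) ^ 2 ≤ ‖F x‖ ∧ ‖F x‖ ≤ ‖x‖ / (1 - ‖x‖) ^ 2 := by
  intro x hx
  rcases eq_or_ne x 0 with rfl | hxne
  · simp [hF 0 hx]
  have hxpos : 0 < ‖x‖ := norm_pos_iff.mpr hxne
  have hx1 : ‖x‖ < 1 := by simpa using hx
  obtain ⟨hFd, hFi, g, hgd, hgF⟩ := hbi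
  set u : X := (‖x‖⁻¹ : ℂ) • x with hu
  have hun : ‖u‖ = 1 := by
    rw [hu, norm_smul]; simp [hxpos.ne']
  have hune : u ≠ 0 := by rw [← norm_pos_iff, hun]; exact one_pos
  have hxu : (‖x‖ : ℂ) • u = x := by
    have : (‖x‖ : ℂ) ≠ 0 := by exact_mod_cast hxpos.ne'
    rw [hu, smul_smul, mul_inv_cancel₀ this, one_smul]
  have hmem : ∀ z : ℂ, z ∈ ball (0 : ℂ) 1 → z • u ∈ ball (0 : X) 1 := by
    intro z hz
    rw [mem_ball_zero_iff] at hz ⊢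
    rwa [norm_smul, hun, mul_one]
  set φ : ℂ → ℂ := fun z => f (z • u) * z with hφ
  have hφF : ∀ z ∈ ball (0 : ℂ) 1, F (z • u) = φ z • u := by
    intro z hz
    rw [hF _ (hmem z hz), smul_smul]
  have hφd : DifferentiableOn ℂ φ (ball 0 1) :=
    (hf.comp (by fun_prop) hmem).mul differentiableOn_id
  have hφi : InjOn φ (ball 0 1) := by
    intro a ha b hb hab
    have : a • u = b • u := hFi (hmem a ha) (hmem b hb) (by rw [hφF a ha, hφF b hb, hab])
    exact smul_left_injective ℂ hune this
  have hφ0 : φ 0 = 0 := by simp [hφ]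
  have hz0 : (0 : ℂ) ∈ ball (0 : ℂ) 1 := mem_ball_self one_pos
  have hφ1 : deriv φ 0 = 1 := by
    have h1 : DifferentiableOn ℂ (fun z : ℂ => f (z • u)) (ball 0 1) :=
      hf.comp (by fun_prop) hmem
    have h2 := (h1.differentiableAt (isOpen_ball.mem_nhds hz0)).hasDerivAt.mul (hasDerivAt_id (0 : ℂ))
    refine (h2.congr_deriv ?_).deriv
    simp [hf0]
  have hφne : ∀ z ∈ ball (0 : ℂ) 1, deriv φ z ≠ 0 := by
    intro z hz hzero
    have hb := hmem z hz
    have hFa : HasFDerivAt F (fderiv ℂ F (z • u)) (z • u) :=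
      (hFd.differentiableAt (isOpen_ball.mem_nhds hb)).hasFDerivAt
    have hga : HasFDerivWithinAt g (fderivWithin ℂ g (F '' ball 0 1) (F (z • u))) (F '' ball 0 1)
        (F (z • u)) := (hgd _ (mem_image_of_mem F hb)).hasFDerivWithinAt
    have hcomp := (hga.comp (z • u) hFa.hasFDerivWithinAt (mapsTo_image F (ball 0 1))).hasFDerivAt
      (isOpen_ball.mem_nhds hb)
    have hid : HasFDerivAt (g ∘ F) (ContinuousLinearMap.id ℂ X) (z • u) := by
      refine (hasFDerivAt_id (z • u)).congr_of_eventuallyEq ?_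
      filter_upwards [isOpen_ball.mem_nhds hb] with y hy using hgF y hy
    have huniq := hcomp.unique hid
    have hline : HasDerivAt (fun t : ℂ => t • u) u z := by
      simpa using (hasDerivAt_id z).smul_const u
    have h1 : HasDerivAt (fun t : ℂ => F (t • u)) (fderiv ℂ F (z • u) u) z :=
      hFa.comp_hasDerivAt z hline
    have h2 : HasDerivAt (fun t : ℂ => F (t • u)) (deriv φ z • u) z := by
      refine (((hφd.differentiableAt (isOpen_ball.mem_nhds hz)).hasDerivAt).smul_const u).congr_of_eventuallyEq ?_
      filter_upwards [isOpen_ball.mem_nhds hz] with y hy using hφF y hy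
    have h3 := h1.unique h2
    rw [hzero, zero_smul] at h3
    have h4 := congrArg (fun L : X →L[ℂ] X => L u) huniq
    simp [h3] at h4
    exact hune h4.symm
  have hxb : (‖x‖ : ℂ) ∈ ball (0 : ℂ) 1 := by simpa using hx1
  have hFx : ‖F x‖ = ‖φ ‖x‖‖ := by
    have := hφF _ hxb
    rw [hxu] at this
    rw [this, norm_smul, hun, mul_one]
  rw [hFx]
  refine ⟨?_, gt_growth_upper hφd hφi hφne hφ0 hφ1 hxpos.le hx1⟩
  have := gt_growth_lower hφd hφi hφne hφ0 hφ1 hxb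
  simpa using this
end
end

section
/- Let f : 𝔹 → ℂ be holomorphic with f(0) = 1, F(x) = f(x)·x for x ∈ 𝔹, and assume F is biholomorphic on 𝔹. Then F(𝔹) contains the ball B_{1/4} = {y ∈ X : ‖y‖ < 1/4}. -/
open Metric Set

noncomputable section

/-- The real-linear map `z ↦ a z + c z̄`. -/
def koebeLin (a c : ℂ) : ℂ →L[ℝ] ℂ :=
  a • (ContinuousLinearMap.id ℝ ℂ) + c • (Complex.conjCLE : ℂ →L[ℝ] ℂ)

lemma koebeLin_apply (a c z : ℂ) : koebeLin a c z = a * z + c * (starRingEnd ℂ) z := by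
  simp [koebeLin]

lemma koebeLin_det (a c : ℂ) :
    LinearMap.det (koebeLin a c : ℂ →ₗ[ℝ] ℂ) = ‖a‖ ^ 2 - ‖c‖ ^ 2 := by
  rw [← LinearMap.det_toMatrix Complex.basisOneI, Matrix.det_fin_two]
  simp only [LinearMap.toMatrix_apply, Complex.coe_basisOneI, Complex.coe_basisOneI_repr,
    ContinuousLinearMap.coe_coe, koebeLin_apply]
  simp [Complex.sq_norm, Complex.normSq_apply]
  ring

open MeasureTheory in
lemma koebe_polar (g : ℂ → ℝ) (m : ℝ → ℝ) (ε r : ℝ) (hε : 0 < ε) (her : ε ≤ r)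
    (hg : ContinuousOn g {z : ℂ | ε ≤ ‖z‖ ∧ ‖z‖ ≤ r}) (hm : ContinuousOn m (Icc ε r))
    (h : ∀ t ∈ Icc ε r, m t ≤ Real.circleAverage g 0 t) :
    2 * Real.pi * (∫ t in ε..r, t * m t) ≤ ∫ z in {z : ℂ | ε ≤ ‖z‖ ∧ ‖z‖ ≤ r}, g z := by
  set A := {z : ℂ | ε ≤ ‖z‖ ∧ ‖z‖ ≤ r} with hA
  have hAc : IsClosed A :=
    (isClosed_le continuous_const continuous_norm).inter
      (isClosed_le continuous_norm continuous_const)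
  have hmem : ∀ t ∈ Icc ε r, ∀ θ : ℝ, circleMap 0 t θ ∈ A := by
    intro t ht θ
    have : ‖circleMap 0 t θ‖ = t := by
      simp [abs_of_pos (hε.trans_le ht.1)]
    simp only [hA, mem_ofPred_eq, this]; exact ht
  have hcont : ContinuousOn (fun p : ℝ × ℝ => p.1 * g (circleMap 0 p.1 p.2))
      (Icc ε r ×ˢ Icc (-Real.pi) Real.pi) := by
    apply ContinuousOn.mul (by fun_prop)
    apply hg.comp
    · unfold circleMap; fun_prop
    · intro p hp; exact hmem _ hp.1 _
  have hint : IntegrableOn (fun p : ℝ × ℝ => p.1 * g (circleMap 0 p.1 p.2))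
      (Icc ε r ×ˢ Icc (-Real.pi) Real.pi) :=
    hcont.integrableOn_compact (isCompact_Icc.prod isCompact_Icc)
  have e1 : ∫ z in A, g z
      = ∫ p in Icc ε r ×ˢ Ioo (-Real.pi) Real.pi, p.1 * g (circleMap 0 p.1 p.2) := by
    rw [← integral_indicator hAc.measurableSet, ← Complex.integral_comp_polarCoord_symm]
    have hT : Icc ε r ×ˢ Ioo (-Real.pi) Real.pi = polarCoord.target ∩ (Icc ε r ×ˢ univ) := by
      ext p
      simp only [polarCoord, mem_prod, mem_inter_iff, mem_Icc, mem_Ioo, mem_Ioi, mem_univ]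
      constructor
      · rintro ⟨h1, h2⟩
        exact ⟨⟨hε.trans_le h1.1, h2⟩, h1, trivial⟩
      · rintro ⟨h1, h2⟩
        exact ⟨h2.1, h1.2⟩
    rw [hT, ← setIntegral_indicator (measurableSet_Icc.prod MeasurableSet.univ)]
    apply setIntegral_congr_fun polarCoord.open_target.measurableSet
    intro p hp
    have hp1 : 0 < p.1 := hp.1
    have hc : Complex.polarCoord.symm p = circleMap 0 p.1 p.2 := by
      simp [circleMap, Complex.exp_mul_I]
    simp only [hc, smul_eq_mul]
    by_cases hq : p.1 ∈ Icc ε r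
    · rw [indicator_of_mem (hmem _ hq _), indicator_of_mem (show p ∈ Icc ε r ×ˢ univ from ⟨hq, trivial⟩)]
    · rw [indicator_of_notMem, indicator_of_notMem, mul_zero]
      · exact fun h => hq h.1
      · intro h
        apply hq
        have : ‖circleMap 0 p.1 p.2‖ = p.1 := by simp [abs_of_pos hp1]
        rw [← this]; exact h
  have e2 : ∀ t ∈ Icc ε r, ∫ θ in Ioo (-Real.pi) Real.pi, t * g (circleMap 0 t θ)
      = 2 * Real.pi * (t * Real.circleAverage g 0 t) := by
    intro t ht
    rw [Real.circleAverage_def, smul_eq_mul, ← integral_Ioc_eq_integral_Ioo,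
      ← intervalIntegral.integral_of_le (by linarith [Real.pi_pos]),
      intervalIntegral.integral_const_mul]
    have hper : Function.Periodic (fun θ => g (circleMap 0 t θ)) (2 * Real.pi) := by
      intro θ
      simp only [periodic_circleMap 0 t θ]
    have := hper.intervalIntegral_add_eq (-Real.pi) 0
    rw [show -Real.pi + 2 * Real.pi = Real.pi by ring, zero_add] at this
    rw [this]
    have := Real.pi_pos
    field_simp
  have e3 : ∫ p in Icc ε r ×ˢ Ioo (-Real.pi) Real.pi, p.1 * g (circleMap 0 p.1 p.2)
      = ∫ t in Icc ε r, ∫ θ in Ioo (-Real.pi) Real.pi, t * g (circleMap 0 t θ) := by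
    rw [Measure.volume_eq_prod, setIntegral_prod]
    exact hint.mono_set (prod_mono le_rfl Ioo_subset_Icc_self)
  rw [e1, e3, intervalIntegral.integral_of_le her, ← integral_Icc_eq_integral_Ioc,
    ← integral_const_mul]
  apply setIntegral_mono_on
  · refine ContinuousOn.integrableOn_compact isCompact_Icc ?_
    fun_prop
  · have := (hint.mono_set (prod_mono le_rfl Ioo_subset_Icc_self) :
      IntegrableOn _ (Icc ε r ×ˢ Ioo (-Real.pi) Real.pi) _)
    rw [IntegrableOn, Measure.volume_eq_prod, ← Measure.prod_restrict] at this
    exact this.integral_prod_left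
  · exact measurableSet_Icc
  · intro t ht
    rw [e2 t ht]
    have := h t ht
    have := hε.trans_le ht.1
    gcongr

lemma koebe_pointwise (Z b T : ℂ) (τ : ℝ) (hτ : 0 < τ) (hZ : ‖Z‖ ^ 2 = τ) :
    (((τ⁻¹ + ‖b‖ ^ 2 : ℝ) : ℂ) + (-2 * b * Z * (τ⁻¹ : ℝ) - 2 * Z ^ 2 * T * (τ⁻¹ : ℝ)
      + 2 * (starRingEnd ℂ) b * Z * T)).re ≤ ‖-Z⁻¹ + b + Z * T‖ ^ 2 := by
  have hinv : Z⁻¹ = (starRingEnd ℂ) Z * ((τ⁻¹ : ℝ) : ℂ) := by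
    rw [Complex.inv_def, ← hZ, Complex.sq_norm]
  rw [hinv]
  have hk : τ * τ⁻¹ = 1 := mul_inv_cancel₀ hτ.ne'
  generalize τ⁻¹ = κ at *
  simp only [Complex.sq_norm, Complex.normSq_apply] at *
  have key : (Z.re ^ 2 + Z.im ^ 2) * κ = 1 := by rw [← hk, ← hZ]; ring
  rw [← sub_nonneg]
  have h0 : 0 ≤ (Z.re ^ 2 + Z.im ^ 2) * (T.re ^ 2 + T.im ^ 2) := by positivity
  refine h0.trans_eq ?_
  simp [pow_two]
  linear_combination (-κ) * key

lemma koebe_circle (b : ℂ) (T : ℂ → ℂ) (hT : DifferentiableOn ℂ T (ball 0 1)) (t : ℝ)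
    (ht : 0 < t) (ht1 : t < 1) :
    (t ^ 4)⁻¹ + ‖b‖ ^ 2 ≤
      Real.circleAverage (fun z => ‖-(z ^ 2)⁻¹ + b + z ^ 2 * T z‖ ^ 2) 0 t := by
  have ht0 : |t| = t := abs_of_pos ht
  have hTc : ContinuousOn T (sphere 0 |t|) := by
    apply hT.continuousOn.mono
    intro z hz
    rw [mem_sphere, ht0] at hz
    rw [mem_ball, hz]; exact ht1
  set W : ℂ → ℂ := fun z => (((t ^ 4)⁻¹ + ‖b‖ ^ 2 : ℝ) : ℂ) + (-2 * b * z ^ 2 * ((t ^ 4)⁻¹ : ℝ)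
      - 2 * (z ^ 2) ^ 2 * T z * ((t ^ 4)⁻¹ : ℝ) + 2 * (starRingEnd ℂ) b * z ^ 2 * T z) with hW
  have hWd : DifferentiableOn ℂ W (ball 0 1) := by
    simp only [hW]; fun_prop
  have hWav : Real.circleAverage W 0 t = W 0 := by
    apply DiffContOnCl.circleAverage
    rw [ht0]
    apply DifferentiableOn.diffContOnCl
    apply hWd.mono
    refine closure_ball_subset_closedBall.trans ?_
    exact closedBall_subset_ball ht1
  have hWi : CircleIntegrable W 0 t := by
    apply ContinuousOn.circleIntegrable'
    simp only [hW]; fun_prop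
  have h1 : Real.circleAverage (Complex.reCLM ∘ W) 0 t = (t ^ 4)⁻¹ + ‖b‖ ^ 2 := by
    rw [Complex.reCLM.circleAverage_comp_comm hWi, hWav]
    simp only [hW, Complex.reCLM_apply]
    rw [Complex.add_re, Complex.ofReal_re]
    simp
  rw [← h1]
  apply Real.circleAverage_mono
  · apply ContinuousOn.circleIntegrable'
    apply Complex.reCLM.continuous.comp_continuousOn
    simp only [hW]; fun_prop
  · apply ContinuousOn.circleIntegrable'
    have : ∀ z ∈ sphere (0 : ℂ) |t|, z ^ 2 ≠ 0 := by
      intro z hz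
      have : ‖z‖ = t := by simpa [ht0] using hz
      have : z ≠ 0 := by rw [← norm_pos_iff, this]; exact ht
      positivity
    fun_prop (disch := assumption)
  · intro z hz
    have hz : ‖z‖ = t := by simpa [ht0] using hz
    have := koebe_pointwise (z ^ 2) b (T z) (t ^ 4) (by positivity) (by rw [norm_pow, hz]; ring)
    exact this

lemma koebe_main_ineq (ε t B C p q : ℝ) (hε : 0 < ε) (hC : 0 ≤ C) (hz : ε ≤ t) (hz1 : t ≤ 1)
    (hb0 : 0 ≤ B) (hs : ε * (2 * B + 3 * C) ≤ 1) (hp : p = (ε ^ 2)⁻¹) (hq : q = (t ^ 2)⁻¹)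
    (hp0 : 0 < p) (htp : 0 < t) :
    t * (p * q) + B * t * (p - q) + p * (C * t ^ 3) ≤ ε * (ε ^ 4)⁻¹ + C := by
  have e1 : t * (p * q) + B * t * (p - q) + p * (C * t ^ 3)
      = p * (t⁻¹ + B * ((t - ε) * (t + ε) / t) + C * t ^ 3) := by
    rw [hp, hq]; field_simp; ring
  have e2 : ε * (ε ^ 4)⁻¹ + C = p * (ε⁻¹ + C * ε ^ 2) := by
    rw [hp]; field_simp
  rw [e1, e2]
  apply mul_le_mul_of_nonneg_left _ hp0.le
  have f1 : (t - ε) * (t + ε) / t ≤ 2 * (t - ε) := by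
    rw [div_le_iff₀ htp]; nlinarith
  have f2 : (t - ε) / ε ≤ ε⁻¹ - t⁻¹ := by
    have : ε⁻¹ - t⁻¹ = (t - ε) / ε / t := by field_simp
    rw [this]
    rw [le_div_iff₀ htp]
    have : 0 ≤ (t - ε) / ε := div_nonneg (by linarith) hε.le
    nlinarith
  have f3 : (t - ε) * (2 * B + 3 * C) ≤ (t - ε) / ε := by
    rw [le_div_iff₀ hε]
    nlinarith
  have f4 : t ^ 3 ≤ 3 * (t - ε) + ε ^ 2 := by
    have g1 : t ^ 3 - ε ^ 3 ≤ 3 * (t - ε) := by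
      have : t ^ 3 - ε ^ 3 = (t - ε) * (t ^ 2 + t * ε + ε ^ 2) := by ring
      rw [this]
      have u1 : t ^ 2 ≤ 1 := pow_le_one₀ htp.le hz1
      have u2 : ε ^ 2 ≤ 1 := pow_le_one₀ hε.le (hz.trans hz1)
      have u3 : t * ε ≤ 1 := mul_le_one₀ hz1 hε.le (hz.trans hz1)
      have u4 : t ^ 2 + t * ε + ε ^ 2 ≤ 3 := by linarith
      have := mul_le_mul_of_nonneg_left u4 (sub_nonneg.2 hz)
      linarith
    have : ε ^ 3 ≤ ε ^ 2 := pow_le_pow_of_le_one hε.le (hz.trans hz1) (by norm_num)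
    linarith
  have f5 := mul_le_mul_of_nonneg_left f4 hC
  have f6 := mul_le_mul_of_nonneg_left f1 hb0
  linarith

lemma koebe_contain (b e z : ℂ) (ε C : ℝ) (hε : 0 < ε) (hC : 0 ≤ C) (hz : ε ≤ ‖z‖) (hz1 : ‖z‖ ≤ 1)
    (he : ‖e‖ ≤ C * ‖z‖ ^ 3) (hs : ε * (2 * ‖b‖ + 3 * C) ≤ 1) (hs' : ε * ‖b‖ ≤ 1) :
    ‖koebeLin (-(starRingEnd ℂ) b) ((ε ^ 2)⁻¹ : ℝ) (z⁻¹ + b * z + e)‖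
      ≤ ε * ((ε ^ 4)⁻¹ - ‖b‖ ^ 2) + (C * ‖b‖ + C) := by
  rw [koebeLin_apply]
  set t := ‖z‖ with ht
  have htp : 0 < t := hε.trans_le hz
  have hz0 : z ≠ 0 := norm_pos_iff.1 htp
  have hb0 := norm_nonneg b
  have hinv : z⁻¹ = (starRingEnd ℂ) z * (((t ^ 2)⁻¹ : ℝ) : ℂ) := by
    rw [Complex.inv_def, ht, Complex.sq_norm]
  have hconj : (starRingEnd ℂ) z⁻¹ = z * (((t ^ 2)⁻¹ : ℝ) : ℂ) := by
    rw [hinv, map_mul, Complex.conj_conj, Complex.conj_ofReal]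
  set p : ℝ := (ε ^ 2)⁻¹ with hp
  set q : ℝ := (t ^ 2)⁻¹ with hq
  have hp0 : 0 < p := by positivity
  have hq0 : 0 < q := by positivity
  have hqp : q ≤ p := by
    rw [hp, hq]; gcongr
  have hbn : (‖b‖ ^ 2 : ℂ) = b * (starRingEnd ℂ) b := (Complex.mul_conj' b).symm
  have heq : -(starRingEnd ℂ) b * (z⁻¹ + b * z + e) + (p : ℂ) * (starRingEnd ℂ) (z⁻¹ + b * z + e)
      = z * ((p * q - ‖b‖ ^ 2 : ℝ) : ℂ) + (starRingEnd ℂ) b * (starRingEnd ℂ) z * ((p - q : ℝ) : ℂ)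
        + (p * (starRingEnd ℂ) e - (starRingEnd ℂ) b * e) := by
    rw [map_add, map_add, hconj, map_mul, hinv]
    push_cast
    rw [hbn]; ring
  rw [heq]
  have h1 : 0 ≤ p * q - ‖b‖ ^ 2 := by
    have h2 : ‖b‖ ^ 2 ≤ p := by
      rw [hp, ← one_div, le_div_iff₀ (by positivity)]
      nlinarith [mul_nonneg hε.le hb0]
    have h3 : 1 ≤ q := by
      rw [hq]; apply (one_le_inv₀ (by positivity)).2; nlinarith
    nlinarith
  have h2 : ‖z * ((p * q - ‖b‖ ^ 2 : ℝ) : ℂ)‖ = t * (p * q - ‖b‖ ^ 2) := by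
    rw [norm_mul, Complex.norm_real, Real.norm_of_nonneg h1]
  have h3 : ‖(starRingEnd ℂ) b * (starRingEnd ℂ) z * ((p - q : ℝ) : ℂ)‖ = ‖b‖ * t * (p - q) := by
    rw [norm_mul, Complex.norm_real, Real.norm_of_nonneg (sub_nonneg.2 hqp), norm_mul,
      Complex.norm_conj, Complex.norm_conj]
  have h4 : ‖p * (starRingEnd ℂ) e - (starRingEnd ℂ) b * e‖ ≤ (p + ‖b‖) * (C * t ^ 3) := by
    refine (norm_sub_le _ _).trans ?_
    rw [norm_mul, norm_mul, Complex.norm_conj, Complex.norm_conj, Complex.norm_real,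
      Real.norm_of_nonneg hp0.le, ← add_mul]
    gcongr
  refine (norm_add₃_le).trans ?_
  rw [h2, h3]
  refine (add_le_add_right h4 _).trans ?_
  have k1 : C * ‖b‖ * t ^ 3 ≤ C * ‖b‖ := by
    have : t ^ 3 ≤ 1 := pow_le_one₀ htp.le hz1
    have := mul_le_mul_of_nonneg_left this (mul_nonneg hC hb0)
    linarith
  have k2 : ‖b‖ ^ 2 * ε ≤ ‖b‖ ^ 2 * t := by gcongr
  have k3 := koebe_main_ineq ε t ‖b‖ C p q hε hC hz hz1 hb0 hs hp hq hp0 htp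
  linarith

lemma koebe_radial (B ε r : ℝ) (hε : 0 < ε) (her : ε ≤ r) :
    ∫ t in ε..r, t * ((t ^ 4)⁻¹ + B ^ 2) =
      ((ε ^ 2)⁻¹ - (r ^ 2)⁻¹ + B ^ 2 * (r ^ 2 - ε ^ 2)) / 2 := by
  have hpos : ∀ t ∈ uIcc ε r, 0 < t := by
    intro t ht
    rw [uIcc_of_le her] at ht
    exact hε.trans_le ht.1
  have hd : ∀ t ∈ uIcc ε r, HasDerivAt (fun t : ℝ => (-(t ^ 2)⁻¹ + B ^ 2 * t ^ 2) / 2)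
      (t * ((t ^ 4)⁻¹ + B ^ 2)) t := by
    intro t ht
    have h0 := hpos t ht
    have h1 := ((hasDerivAt_pow 2 t).inv (by positivity)).neg.add
      ((hasDerivAt_pow 2 t).const_mul (B ^ 2))
    convert! h1.div_const 2 using 1
    field_simp
    simp
    field_simp
  rw [intervalIntegral.integral_eq_sub_of_hasDerivAt hd]
  · ring
  · apply ContinuousOn.intervalIntegrable
    have : ∀ t ∈ uIcc ε r, t ^ 4 ≠ 0 := fun t ht => by have := hpos t ht; positivity
    fun_prop (disch := assumption)

open MeasureTheory in
lemma koebe_area_ineq (b : ℂ) (s : ℂ → ℂ) (hs : DifferentiableOn ℂ s (ball 0 1))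
    (hinj : InjOn (fun z => z⁻¹ + b * z + z ^ 3 * s z) (ball 0 1 \ {0}))
    (r : ℝ) (hr1 : r < 1) (C : ℝ) (hC : 0 ≤ C)
    (hsC : ∀ z : ℂ, ‖z‖ ≤ r → ‖s z‖ ≤ C) (ε : ℝ) (hε : 0 < ε) (her : ε ≤ r)
    (hsm : ε * (2 * ‖b‖ + 3 * C) ≤ 1) (hsm' : ε * ‖b‖ ≤ 1) (D : ℝ)
    (hD : D = (ε ^ 4)⁻¹ - ‖b‖ ^ 2) (hD0 : 0 < D) :
    (ε ^ 2)⁻¹ - (r ^ 2)⁻¹ + ‖b‖ ^ 2 * (r ^ 2 - ε ^ 2) ≤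
      (ε * D + (C * ‖b‖ + C)) ^ 2 / D := by
  set h : ℂ → ℂ := fun z => z⁻¹ + b * z + z ^ 3 * s z with hh
  set T : ℂ → ℂ := fun z => 3 * s z + z * deriv s z with hT
  set h' : ℂ → ℂ := fun z => -(z ^ 2)⁻¹ + b + z ^ 2 * T z with hh'
  set A := {z : ℂ | ε ≤ ‖z‖ ∧ ‖z‖ ≤ r} with hA
  have hAc : IsClosed A :=
    (isClosed_le continuous_const continuous_norm).inter
      (isClosed_le continuous_norm continuous_const)
  have hAcpt : IsCompact A := by
    apply (isCompact_closedBall (0 : ℂ) r).of_isClosed_subset hAc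
    intro z hz
    simpa using hz.2
  have hA0 : ∀ z ∈ A, z ≠ 0 := fun z hz => norm_pos_iff.1 (hε.trans_le hz.1)
  have hA1 : ∀ z ∈ A, z ∈ ball (0 : ℂ) 1 := fun z hz => by
    simpa using hz.2.trans_lt hr1
  have hTd : DifferentiableOn ℂ T (ball 0 1) := by
    have := hs.deriv isOpen_ball
    simp only [hT]; fun_prop
  have hder : ∀ z ∈ A, HasDerivAt h (h' z) z := by
    intro z hz
    have h1 : HasDerivAt s (deriv s z) z :=
      (hs.differentiableAt (isOpen_ball.mem_nhds (hA1 z hz))).hasDerivAt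
    have h2 := ((hasDerivAt_inv (hA0 z hz)).add ((hasDerivAt_id z).const_mul b)).add
      ((hasDerivAt_pow 3 z).mul h1)
    convert! h2 using 1
    simp [hh', hT]
    ring
  have hfd : ∀ z ∈ A, HasFDerivWithinAt h (koebeLin (h' z) 0) A z := by
    intro z hz
    have h1 := ((hder z hz).hasFDerivAt.restrictScalars ℝ).hasFDerivWithinAt (s := A)
    convert! h1 using 1
    ext w; simp [koebeLin_apply, mul_comm]
  have hinjA : InjOn h A := hinj.mono (fun z hz => mem_sdiff_singleton.2 ⟨hA1 z hz, hA0 z hz⟩)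
  have harea := lintegral_abs_det_fderiv_eq_addHaar_image volume hAc.measurableSet hfd hinjA
  have hdet : ∀ z, |(koebeLin (h' z) 0).det| = ‖h' z‖ ^ 2 := by
    intro z
    have := koebeLin_det (h' z) 0
    rw [ContinuousLinearMap.det, this]
    simp
  simp only [hdet] at harea
  have hg : ContinuousOn (fun z => ‖h' z‖ ^ 2) A := by
    have h1 : ∀ z ∈ A, z ^ 2 ≠ 0 := fun z hz => pow_ne_zero 2 (hA0 z hz)
    have h2 : ContinuousOn T A := hTd.continuousOn.mono hA1
    simp only [hh']
    fun_prop (disch := assumption)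
  have hpolar := koebe_polar (fun z => ‖h' z‖ ^ 2) (fun t => (t ^ 4)⁻¹ + ‖b‖ ^ 2) ε r hε her hg
    (by
      have : ∀ t ∈ Icc ε r, t ^ 4 ≠ 0 := fun t ht => by
        have := hε.trans_le ht.1
        positivity
      fun_prop (disch := assumption))
    (fun t ht => koebe_circle b T hTd t (hε.trans_le ht.1) (ht.2.trans_lt hr1))
  rw [koebe_radial ‖b‖ ε r hε her] at hpolar
  set ρ := ε * D + (C * ‖b‖ + C) with hρ
  have hρ0 : 0 ≤ ρ := by positivity
  set N := koebeLin (-(starRingEnd ℂ) b) ((ε ^ 2)⁻¹ : ℝ) with hN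
  have hNdet : LinearMap.det (N : ℂ →ₗ[ℝ] ℂ) = -D := by
    rw [hN, koebeLin_det, hD, norm_neg, Complex.norm_conj, Complex.norm_real, Real.norm_eq_abs,
      sq_abs]
    ring
  have hsub : h '' A ⊆ (N : ℂ →ₗ[ℝ] ℂ) ⁻¹' closedBall 0 ρ := by
    rintro _ ⟨z, hz, rfl⟩
    rw [mem_preimage, mem_closedBall_zero_iff, hρ, hD]
    apply koebe_contain b (z ^ 3 * s z) z ε C hε hC hz.1 (hz.2.trans hr1.le) _ hsm hsm'
    rw [norm_mul, norm_pow, mul_comm]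
    gcongr
    exact hsC z hz.2
  have hvol : volume (h '' A) ≤ ENNReal.ofReal (D⁻¹ * (ρ ^ 2 * Real.pi)) := by
    refine (measure_mono hsub).trans ?_
    rw [Measure.addHaar_preimage_linearMap volume (by rw [hNdet]; exact neg_ne_zero.2 hD0.ne'),
      hNdet, Complex.volume_closedBall, inv_neg, abs_neg, abs_of_pos (inv_pos.2 hD0),
      ENNReal.ofReal_mul (inv_pos.2 hD0).le, ENNReal.ofReal_mul (by positivity),
      ENNReal.ofReal_pow hρ0]
    apply le_of_eq
    congr 2
    rw [← NNReal.coe_real_pi, ENNReal.ofReal_coe_nnreal]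
  rw [← harea, ← ofReal_integral_eq_lintegral_ofReal (hg.integrableOn_compact hAcpt)
    (Filter.Eventually.of_forall fun z => by positivity)] at hvol
  have hvol' := (ENNReal.ofReal_le_ofReal_iff (by positivity)).1 hvol
  have := hpolar.trans hvol'
  have hpi := Real.pi_pos
  have e : D⁻¹ * (ρ ^ 2 * Real.pi) = Real.pi * (ρ ^ 2 / D) := by field_simp
  rw [e] at this
  refine le_of_mul_le_mul_left ?_ hpi
  linarith

lemma koebe_area (b : ℂ) (s : ℂ → ℂ) (hs : DifferentiableOn ℂ s (ball 0 1))
    (hinj : InjOn (fun z => z⁻¹ + b * z + z ^ 3 * s z) (ball 0 1 \ {0})) : ‖b‖ ≤ 1 := by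
  -- for each radius `r < 1`
  have key : ∀ r : ℝ, 0 < r → r < 1 → ‖b‖ ^ 2 * r ^ 2 ≤ (r ^ 2)⁻¹ := by
    intro r hr0 hr1
    obtain ⟨C, hC⟩ := (isCompact_closedBall (0 : ℂ) r).exists_bound_of_continuousOn
      (hs.continuousOn.mono (closedBall_subset_ball hr1))
    have hC0 : 0 ≤ C := (norm_nonneg _).trans (hC 0 (by simpa using hr0.le))
    have hb0 := norm_nonneg b
    set K := C * ‖b‖ + C with hK
    have hK0 : 0 ≤ K := by positivity
    apply le_of_forall_pos_le_add
    intro η hη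
    obtain ⟨ε, hε, hεm⟩ : ∃ ε : ℝ, 0 < ε ∧ ε ≤ min (min r (1 / (2 * ‖b‖ + 3 * C + 1)))
        (η / (2 * K + K ^ 2 + 1)) :=
      ⟨_, by positivity, le_rfl⟩
    have h1 : ε ≤ r := hεm.trans ((min_le_left _ _).trans (min_le_left _ _))
    have h2 : ε * (2 * ‖b‖ + 3 * C + 1) ≤ 1 := by
      rw [← le_div_iff₀ (by positivity)]
      exact hεm.trans ((min_le_left _ _).trans (min_le_right _ _))
    have h3 : ε * (2 * K + K ^ 2 + 1) ≤ η := by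
      rw [← le_div_iff₀ (by positivity)]
      exact hεm.trans (min_le_right _ _)
    have hb1 := mul_nonneg hε.le hb0
    have hc1 := mul_nonneg hε.le hC0
    have hε1 : ε ≤ 1 := h1.trans hr1.le
    obtain ⟨D, hD⟩ : ∃ D : ℝ, D = (ε ^ 4)⁻¹ - ‖b‖ ^ 2 := ⟨_, rfl⟩
    -- `ε * (‖b‖ + 1) ≤ 1`
    have h4 : ε * (‖b‖ + 1) ≤ 1 := by nlinarith
    have h5 : 1 ≤ D * ε := by
      have e : D * ε = (1 - (‖b‖ * ε) ^ 2 * ε ^ 2) / ε ^ 3 := by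
        rw [hD]; field_simp
      rw [e, le_div_iff₀ (by positivity)]
      have u1 : ‖b‖ * ε ≤ 1 - ε := by linarith
      have u2 : (‖b‖ * ε) ^ 2 ≤ 1 - ε := by
        have : ‖b‖ * ε ≤ 1 := by linarith
        nlinarith
      have u3 := mul_le_mul_of_nonneg_right u2 (sq_nonneg ε)
      have u4 : ε ^ 2 ≤ 1 := pow_le_one₀ hε.le hε1
      linarith
    have hD0 : 0 < D := by
      by_contra hn
      nlinarith
    have main := koebe_area_ineq b s hs hinj r hr1 C hC0 (fun z hz => hC z (by simpa using hz)) ε hε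
      h1 (by nlinarith) (by nlinarith) D hD hD0
    rw [← hK] at main
    have e : (ε * D + K) ^ 2 / D = ε ^ 2 * D + 2 * ε * K + K ^ 2 / D := by
      field_simp; ring
    have e2 : ε ^ 2 * D = (ε ^ 2)⁻¹ - ε ^ 2 * ‖b‖ ^ 2 := by
      rw [hD]; field_simp
    have e3 : K ^ 2 / D ≤ K ^ 2 * ε := by
      rw [div_le_iff₀ hD0]
      nlinarith [sq_nonneg K]
    rw [e, e2] at main
    nlinarith
  have lim : Filter.Tendsto (fun r : ℝ => ‖b‖ ^ 2 * r ^ 2) (nhdsWithin 1 (Iio 1))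
      (nhds (‖b‖ ^ 2 * 1 ^ 2)) :=
    ((continuous_const.mul (continuous_pow 2)).tendsto 1).mono_left nhdsWithin_le_nhds
  have lim2 : Filter.Tendsto (fun r : ℝ => (r ^ 2)⁻¹) (nhdsWithin 1 (Iio 1))
      (nhds ((1 ^ 2 : ℝ)⁻¹)) :=
    Filter.Tendsto.inv₀ (((continuous_pow 2).tendsto (1 : ℝ)).mono_left nhdsWithin_le_nhds)
      (by norm_num)
  have := le_of_tendsto_of_tendsto lim lim2 (by
    filter_upwards [Ioo_mem_nhdsLT (show (0 : ℝ) < 1 by norm_num)] with r hr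
    exact key r hr.1 hr.2)
  have h0 := norm_nonneg b
  norm_num at this
  exact this

lemma koebe_a2 (p : ℂ → ℂ) (hp : DifferentiableOn ℂ p (ball 0 1)) (hp0 : p 0 = 1)
    (hinj : InjOn (fun z => z * p z) (ball 0 1)) : ‖deriv p 0‖ ≤ 2 := by
  have h0mem : (0 : ℂ) ∈ ball (0 : ℂ) 1 := by simp
  have hpne : ∀ z ∈ ball (0 : ℂ) 1, p z ≠ 0 := by
    intro z hz h
    have : z = 0 := hinj hz h0mem (by simp [h])
    rw [this, hp0] at h
    exact one_ne_zero h
  have hpd : ∀ z ∈ ball (0 : ℂ) 1, HasDerivAt p (deriv p z) z := fun z hz =>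
    (hp.differentiableAt (isOpen_ball.mem_nhds hz)).hasDerivAt
  have hlog : DifferentiableOn ℂ (fun z => deriv p z / p z) (ball 0 1) :=
    (hp.deriv isOpen_ball).div hp hpne
  obtain ⟨L, hL0, hL⟩ := hlog.isExactOn_ball.with_val_at 0 0
  have hexp : ∀ z ∈ ball (0 : ℂ) 1, Complex.exp (-L z) * p z = 1 := by
    intro z hz
    have hd : ∀ z ∈ ball (0 : ℂ) 1, HasDerivAt (fun z => Complex.exp (-L z) * p z) 0 z := by
      intro z hz
      have := (hL z hz).neg.cexp.mul (hpd z hz)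
      convert! this using 1
      have := hpne z hz
      field_simp
      ring
    have := isOpen_ball.is_const_of_deriv_eq_zero (convex_ball (0 : ℂ) 1).isPreconnected
      (fun z hz => (hd z hz).differentiableAt.differentiableWithinAt)
      (fun z hz => (hd z hz).deriv) hz h0mem
    simpa [hL0, hp0] using this
  set Q : ℂ → ℂ := fun z => Complex.exp (-L z / 2) with hQ
  have hQ2 : ∀ z ∈ ball (0 : ℂ) 1, Q z ^ 2 * p z = 1 := by
    intro z hz
    rw [← hexp z hz]
    simp only [hQ]
    rw [← Complex.exp_nat_mul]
    congr 2
    push_cast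
    ring
  have hQne : ∀ z, Q z ≠ 0 := fun z => Complex.exp_ne_zero _
  have hQd : ∀ z ∈ ball (0 : ℂ) 1, HasDerivAt Q (Q z * (-(deriv p z / p z) / 2)) z :=
    fun z hz => ((hL z hz).neg.div_const 2).cexp
  have hQ0 : Q 0 = 1 := by simp [hQ, hL0]
  have hQdiff : DifferentiableOn ℂ Q (ball 0 1) :=
    fun z hz => (hQd z hz).differentiableAt.differentiableWithinAt
  have hnhds : ball (0 : ℂ) 1 ∈ nhds (0 : ℂ) := isOpen_ball.mem_nhds h0mem
  set S : ℂ → ℂ := dslope (dslope Q 0) 0 with hS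
  have hSd : DifferentiableOn ℂ S (ball 0 1) :=
    (Complex.differentiableOn_dslope hnhds).2 ((Complex.differentiableOn_dslope hnhds).2 hQdiff)
  set b := deriv Q 0 with hb
  have hbp : b = -(deriv p 0) / 2 := by
    rw [hb, (hQd 0 h0mem).deriv, hQ0, hp0]; ring
  have hexpand : ∀ z, Q z = 1 + b * z + z ^ 2 * S z := by
    intro z
    have h1 := sub_smul_dslope Q 0 z
    have h2 := sub_smul_dslope (dslope Q 0) 0 z
    rw [dslope_same, ← hb, ← hS] at h2
    simp only [sub_zero, smul_eq_mul, hQ0] at h1 h2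
    linear_combination -h1 - z * h2
  have hsqmem : ∀ z ∈ ball (0 : ℂ) 1, z ^ 2 ∈ ball (0 : ℂ) 1 := by
    intro z hz
    simp only [mem_ball_zero_iff, norm_pow] at hz ⊢
    exact pow_lt_one₀ (norm_nonneg z) hz (by norm_num)
  have harea := koebe_area b (fun z => S (z ^ 2))
    (hSd.comp (by fun_prop) hsqmem) (by
      have hform : ∀ z : ℂ, z ≠ 0 → z⁻¹ + b * z + z ^ 3 * S (z ^ 2) = z⁻¹ * Q (z ^ 2) := by
        intro z hz
        rw [hexpand]
        field_simp
      intro z hz w hw hzw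
      have hz0 : z ≠ 0 := hz.2
      have hw0 : w ≠ 0 := hw.2
      simp only [hform z hz0, hform w hw0] at hzw
      have e1 := hQ2 _ (hsqmem z hz.1)
      have e2 := hQ2 _ (hsqmem w hw.1)
      have hsq : z ^ 2 = w ^ 2 := by
        apply hinj (hsqmem z hz.1) (hsqmem w hw.1)
        have e3 : Q (z ^ 2) * w = Q (w ^ 2) * z := by
          field_simp at hzw
          linear_combination hzw
        have e4 : (Q (z ^ 2) * w) ^ 2 = (Q (w ^ 2) * z) ^ 2 := by rw [e3]
        show z ^ 2 * p (z ^ 2) = w ^ 2 * p (w ^ 2)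
        linear_combination (-(z ^ 2 * p (z ^ 2))) * e2 + (w ^ 2 * p (w ^ 2)) * e1
          - p (z ^ 2) * p (w ^ 2) * e4
      rw [hsq] at hzw
      exact inv_injective (mul_right_cancel₀ (hQne _) hzw))
  rw [hbp, norm_div, norm_neg] at harea
  simp only [Complex.norm_ofNat] at harea
  linarith

lemma koebe_quarter (p : ℂ → ℂ) (hp : DifferentiableOn ℂ p (ball 0 1)) (hp0 : p 0 = 1)
    (hinj : InjOn (fun z => z * p z) (ball 0 1)) (w : ℂ) (hw : ‖w‖ < 1 / 4) :
    ∃ z ∈ ball (0 : ℂ) 1, z * p z = w := by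
  by_contra! hne
  have h0mem : (0 : ℂ) ∈ ball (0 : ℂ) 1 := by simp
  have hw0 : w ≠ 0 := by
    intro h
    exact hne 0 h0mem (by simp [h])
  have hden : ∀ z ∈ ball (0 : ℂ) 1, 1 - z * p z / w ≠ 0 := by
    intro z hz h
    apply hne z hz
    field_simp at h
    linear_combination -h
  have h1 := koebe_a2 p hp hp0 hinj
  have h2 := koebe_a2 (fun z => p z / (1 - z * p z / w)) (hp.div (by fun_prop) hden) (by simp [hp0])
    (by
      intro x hx y hy hxy
      apply hinj hx hy
      have a1 := hden x hx
      have a2 := hden y hy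
      simp only [← mul_div_assoc] at hxy ⊢
      rw [div_eq_div_iff a1 a2] at hxy
      linear_combination hxy)
  have hpd : HasDerivAt p (deriv p 0) 0 :=
    (hp.differentiableAt (isOpen_ball.mem_nhds h0mem)).hasDerivAt
  have hd : HasDerivAt (fun z => p z / (1 - z * p z / w)) (deriv p 0 + w⁻¹) 0 := by
    have := hpd.div ((((hasDerivAt_id (0 : ℂ)).mul hpd).div_const w).const_sub 1)
      (by simp)
    convert! this using 1
    simp [hp0]
  rw [hd.deriv] at h2
  have h3 : ‖w⁻¹‖ ≤ 4 := by
    calc ‖w⁻¹‖ = ‖(deriv p 0 + w⁻¹) - deriv p 0‖ := by congr 1; ring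
      _ ≤ _ := norm_sub_le _ _
      _ ≤ 4 := by linarith
  rw [norm_inv] at h3
  have hwp : 0 < ‖w‖ := norm_pos_iff.2 hw0
  rw [inv_le_comm₀ hwp (by norm_num)] at h3
  linarith

/-- **Covering theorem.** Let `F(x) = f(x)·x` be biholomorphic on the unit ball `𝔹` of a
complex Banach space, with `f` holomorphic and `f(0) = 1`. Then `F(𝔹)` contains the ball
`B_{1/4}`. -/
theorem stmt7 {X : Type*} [NormedAddCommGroup X] [NormedSpace ℂ X] [CompleteSpace X]
    (f : X → ℂ) (hf : DifferentiableOn ℂ f (ball (0 : X) 1)) (hf0 : f 0 = 1)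
    (F : X → X) (hF : ∀ x ∈ ball (0 : X) 1, F x = f x • x)
    (hbi : IsBiholoOn F (ball (0 : X) 1)) :
    ball (0 : X) (1 / 4) ⊆ F '' ball (0 : X) 1 := by
  intro y hy
  rw [mem_ball_zero_iff] at hy
  by_cases hy0 : y = 0
  · refine ⟨0, by simp, ?_⟩
    rw [hF 0 (by simp), smul_zero, hy0]
  have hyn : ‖y‖ ≠ 0 := norm_ne_zero_iff.2 hy0
  obtain ⟨u, hu⟩ : ∃ u : X, u = ((‖y‖⁻¹ : ℝ) : ℂ) • y := ⟨_, rfl⟩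
  have hun : ‖u‖ = 1 := by
    rw [hu, norm_smul, Complex.norm_real, norm_inv, norm_norm, inv_mul_cancel₀ hyn]
  have hu0 : u ≠ 0 := by rw [← norm_ne_zero_iff, hun]; exact one_ne_zero
  have hmem : ∀ z ∈ ball (0 : ℂ) 1, z • u ∈ ball (0 : X) 1 := by
    intro z hz
    rw [mem_ball_zero_iff] at hz ⊢
    rwa [norm_smul, hun, mul_one]
  obtain ⟨z, hz, hzw⟩ := koebe_quarter (fun z => f (z • u)) (hf.comp (by fun_prop) hmem)
    (by simp [hf0]) (by
      intro z hz w hw hzw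
      have : F (z • u) = F (w • u) := by
        rw [hF _ (hmem z hz), hF _ (hmem w hw), smul_smul, smul_smul, mul_comm _ z, mul_comm _ w]
        exact congrArg (· • u) hzw
      exact smul_left_injective ℂ hu0 (hbi.2.1 (hmem z hz) (hmem w hw) this))
    ((‖y‖ : ℝ) : ℂ) (by simpa using hy)
  refine ⟨z • u, hmem z hz, ?_⟩
  rw [hF _ (hmem z hz), smul_smul, mul_comm]
  rw [hzw, hu, smul_smul, ← Complex.ofReal_mul, mul_inv_cancel₀ hyn, Complex.ofReal_one, one_smul]
end
end

section
/- Let f : 𝔹 → ℂ be holomorphic with f(0) = 1, F(x) = f(x)·x for x ∈ 𝔹, and assume F is biholomorphic on 𝔹. Then for all x ∈ 𝔹, ‖x‖(1−‖x‖)/(1+‖x‖)³ ≤ ‖DF(x)x‖ ≤ ‖x‖(1+‖x‖)/(1−‖x‖)³, where DF(x) is the Fréchet derivative of F at x. -/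
open Metric Set

noncomputable section

def rlin (a b : ℂ) : ℂ →L[ℝ] ℂ :=
  a • (1 : ℂ →L[ℝ] ℂ) + b • (Complex.conjCLE : ℂ →L[ℝ] ℂ)

lemma rlin_apply (a b w : ℂ) : rlin a b w = a * w + b * (starRingEnd ℂ) w := by
  simp [rlin]

lemma rlin_det (a b : ℂ) : (rlin a b).det = ‖a‖ ^ 2 - ‖b‖ ^ 2 := by
  have h : (rlin a b).det = LinearMap.det ((rlin a b) : ℂ →ₗ[ℝ] ℂ) := rfl
  rw [h, ← LinearMap.det_toMatrix Complex.basisOneI, Matrix.det_fin_two]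
  simp [LinearMap.toMatrix_apply, rlin_apply]
  rw [Complex.sq_norm, Complex.sq_norm, Complex.normSq_apply, Complex.normSq_apply]
  ring

lemma circle_pointwise (t : ℝ) (z Q b : ℂ) (hz : ‖z‖ = t) :
    (1 - 2 * z ^ 2 * Q + 2 * (starRingEnd ℂ) b * (t : ℂ) ^ 4 * Q - (‖b‖ : ℂ) ^ 2 * (t : ℂ) ^ 4).re
      ≤ ‖-1 + z ^ 2 * Q‖ ^ 2 := by
  have h1 : ‖-1 + z ^ 2 * Q‖ ^ 2 = 1 - 2 * (z ^ 2 * Q).re + t ^ 4 * ‖Q‖ ^ 2 := by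
    have : t ^ 4 * ‖Q‖ ^ 2 = ‖z ^ 2 * Q‖ ^ 2 := by rw [norm_mul, norm_pow, hz]; ring
    rw [this]
    generalize z ^ 2 * Q = w
    rw [Complex.sq_norm, Complex.sq_norm, Complex.normSq_apply, Complex.normSq_apply]
    simp; ring
  have h2 : 0 ≤ ‖Q - b‖ ^ 2 := by positivity
  have h3 : ‖Q - b‖ ^ 2 = ‖Q‖ ^ 2 - 2 * ((starRingEnd ℂ) b * Q).re + ‖b‖ ^ 2 := by
    simp only [Complex.sq_norm, Complex.normSq_apply]
    simp; ring
  have h4 : (1 - 2 * z ^ 2 * Q + 2 * (starRingEnd ℂ) b * (t : ℂ) ^ 4 * Q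
      - (‖b‖ : ℂ) ^ 2 * (t : ℂ) ^ 4) = ((1 - ‖b‖ ^ 2 * t ^ 4 : ℝ) : ℂ) - ((2 : ℝ) : ℂ) * (z ^ 2 * Q)
      + ((2 * t ^ 4 : ℝ) : ℂ) * ((starRingEnd ℂ) b * Q) := by push_cast; ring
  rw [h4, h1, Complex.add_re, Complex.sub_re, Complex.re_ofReal_mul, Complex.re_ofReal_mul, Complex.ofReal_re]
  have : 0 ≤ t ^ 4 * (‖Q‖ ^ 2 - 2 * ((starRingEnd ℂ) b * Q).re + ‖b‖ ^ 2) := by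
    rw [← h3]; positivity
  nlinarith

lemma circle_int (Q : ℂ → ℂ) (hQ : DifferentiableOn ℂ Q (ball 0 1)) (t : ℝ) (ht0 : 0 < t)
    (ht1 : t < 1) :
    2 * Real.pi * (1 + ‖Q 0‖ ^ 2 * t ^ 4) ≤
      ∫ θ in (-Real.pi)..Real.pi, ‖-1 + (circleMap 0 t θ) ^ 2 * Q (circleMap 0 t θ)‖ ^ 2 := by
  set b := Q 0 with hb
  let Φ : ℂ → ℂ := fun z => 1 - 2 * z ^ 2 * Q z + 2 * (starRingEnd ℂ) b * (t : ℂ) ^ 4 * Q z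
    - (‖b‖ : ℂ) ^ 2 * (t : ℂ) ^ 4
  have hsub : closedBall (0 : ℂ) |t| ⊆ ball 0 1 := by
    rw [abs_of_pos ht0]; exact closedBall_subset_ball ht1
  have hΦd : DifferentiableOn ℂ Φ (ball 0 1) := by
    dsimp only [Φ]; fun_prop
  have hmv := circleAverage_of_differentiable_on_off_countable (f := Φ) (c := 0) (R := t)
    countable_empty (hΦd.continuousOn.mono hsub)
    (fun z hz => hΦd.differentiableAt (isOpen_ball.mem_nhds (hsub (ball_subset_closedBall hz.1))))
  rw [Real.circleAverage_def] at hmv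
  have hmem : ∀ θ, circleMap 0 t θ ∈ ball (0 : ℂ) 1 := fun θ => by
    simp [circleMap, abs_of_pos ht0, ht1]
  have hΦc : Continuous (fun θ => Φ (circleMap 0 t θ)) :=
    hΦd.continuousOn.comp_continuous (continuous_circleMap 0 t) hmem
  have hQc : Continuous (fun θ => Q (circleMap 0 t θ)) :=
    hQ.continuousOn.comp_continuous (continuous_circleMap 0 t) hmem
  have hper : ∫ θ in (0:ℝ)..2 * Real.pi, Φ (circleMap 0 t θ) =
      ∫ θ in (-Real.pi)..Real.pi, Φ (circleMap 0 t θ) := by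
    have := (show Function.Periodic (fun θ => Φ (circleMap 0 t θ)) (2 * Real.pi) from
      fun θ => by simp only [periodic_circleMap 0 t θ]).intervalIntegral_add_eq 0 (-Real.pi)
    convert this using 2 <;> ring
  have hre : ∫ θ in (-Real.pi)..Real.pi, (Φ (circleMap 0 t θ)).re =
      2 * Real.pi * (1 + ‖b‖ ^ 2 * t ^ 4) := by
    have h1 : ∫ θ in (-Real.pi)..Real.pi, (Φ (circleMap 0 t θ)).re =
      (∫ θ in (-Real.pi)..Real.pi, (Φ (circleMap 0 t θ))).re :=
        Complex.reCLM.intervalIntegral_comp_comm (hΦc.intervalIntegrable _ _)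
    have h2 : ∫ θ in (-Real.pi)..Real.pi, (Φ (circleMap 0 t θ)) = ((2 * Real.pi : ℝ)) • Φ 0 := by
      rw [← hper, ← hmv, smul_smul, mul_inv_cancel₀ (by positivity), one_smul]
    have h3 : Φ 0 = ((1 + ‖b‖ ^ 2 * t ^ 4 : ℝ) : ℂ) := by
      simp only [Φ, ← hb]
      have : (starRingEnd ℂ) b * b = (‖b‖ : ℂ) ^ 2 := by
        rw [mul_comm, Complex.mul_conj, Complex.normSq_eq_norm_sq]; push_cast; rfl
      push_cast
      linear_combination 2 * (t : ℂ) ^ 4 * this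
    rw [h1, h2, h3, Complex.smul_re, Complex.ofReal_re, smul_eq_mul]
  rw [← hre]
  apply intervalIntegral.integral_mono_on (by linarith [Real.pi_pos])
  · exact (Complex.continuous_re.comp hΦc).intervalIntegrable _ _
  · apply Continuous.intervalIntegrable
    exact ((continuous_const.add (((continuous_circleMap 0 t).pow 2).mul hQc)).norm.pow 2)
  · intro θ _
    exact circle_pointwise t _ _ _ (by simp [circleMap, abs_of_pos ht0])

lemma circle_lint (Q : ℂ → ℂ) (hQ : DifferentiableOn ℂ Q (ball 0 1)) (t : ℝ) (ht0 : 0 < t)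
    (ht1 : t < 1) :
    ENNReal.ofReal (2 * Real.pi * (1 / t ^ 4 + ‖Q 0‖ ^ 2)) ≤
      ∫⁻ θ in Ioo (-Real.pi) Real.pi,
        ENNReal.ofReal (‖-1 / (circleMap 0 t θ) ^ 2 + Q (circleMap 0 t θ)‖ ^ 2) := by
  have h := circle_int Q hQ t ht0 ht1
  have hmem : ∀ θ, circleMap 0 t θ ∈ ball (0 : ℂ) 1 := fun θ => by
    simp [circleMap, abs_of_pos ht0, ht1]
  have hQc : Continuous (fun θ => Q (circleMap 0 t θ)) :=
    hQ.continuousOn.comp_continuous (continuous_circleMap 0 t) hmem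
  have hcm := continuous_circleMap 0 t
  have hne : ∀ θ, circleMap 0 t θ ≠ 0 := fun θ => circleMap_ne_center ht0.ne'
  have hpt : ∀ θ, ‖-1 / (circleMap 0 t θ) ^ 2 + Q (circleMap 0 t θ)‖ ^ 2 =
      (1 / t ^ 4) * ‖-1 + (circleMap 0 t θ) ^ 2 * Q (circleMap 0 t θ)‖ ^ 2 := by
    intro θ
    have h1 : -1 / (circleMap 0 t θ) ^ 2 + Q (circleMap 0 t θ) =
      (-1 + (circleMap 0 t θ) ^ 2 * Q (circleMap 0 t θ)) / (circleMap 0 t θ) ^ 2 := by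
      have := hne θ
      field_simp
    have h2 : ‖circleMap 0 t θ‖ = t := by simp [circleMap, abs_of_pos ht0]
    rw [h1, norm_div, norm_pow, h2]
    field_simp
  simp_rw [hpt]
  have hint : MeasureTheory.IntegrableOn
      (fun θ => (1 / t ^ 4) * ‖-1 + (circleMap 0 t θ) ^ 2 * Q (circleMap 0 t θ)‖ ^ 2)
      (Ioo (-Real.pi) Real.pi) := by
    refine (Continuous.integrableOn_Icc (a := -Real.pi) (b := Real.pi) ?_).mono_set Ioo_subset_Icc_self
    exact continuous_const.mul ((continuous_const.add ((hcm.pow 2).mul hQc)).norm.pow 2)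
  rw [← MeasureTheory.ofReal_integral_eq_lintegral_ofReal hint
    (Filter.Eventually.of_forall fun θ => by positivity)]
  apply ENNReal.ofReal_le_ofReal
  rw [MeasureTheory.integral_const_mul, ← MeasureTheory.integral_Ioc_eq_integral_Ioo,
    ← intervalIntegral.integral_of_le (by linarith [Real.pi_pos])]
  have : 2 * Real.pi * (1 / t ^ 4 + ‖Q 0‖ ^ 2) =
    (1 / t ^ 4) * (2 * Real.pi * (1 + ‖Q 0‖ ^ 2 * t ^ 4)) := by field_simp
  rw [this]
  gcongr

lemma annulus_lint (Q : ℂ → ℂ) (hQ : DifferentiableOn ℂ Q (ball 0 1)) (ρ r : ℝ) (h0 : 0 < ρ)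
    (h1 : ρ < r) (h2 : r < 1) :
    ENNReal.ofReal (Real.pi * (1 / ρ ^ 2 - 1 / r ^ 2) + Real.pi * ‖Q 0‖ ^ 2 * (r ^ 2 - ρ ^ 2)) ≤
      ∫⁻ z in {z : ℂ | ρ < ‖z‖ ∧ ‖z‖ < r}, ENNReal.ofReal (‖-1 / z ^ 2 + Q z‖ ^ 2) := by
  have hms : MeasurableSet {z : ℂ | ρ < ‖z‖ ∧ ‖z‖ < r} :=
    ((isOpen_lt continuous_const continuous_norm).inter
      (isOpen_lt continuous_norm continuous_const)).measurableSet
  set A := {z : ℂ | ρ < ‖z‖ ∧ ‖z‖ < r} with hA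
  rw [← MeasureTheory.lintegral_indicator hms, ← Complex.lintegral_comp_polarCoord_symm]
  set g : ℂ → ENNReal := A.indicator fun z => ENNReal.ofReal (‖-1 / z ^ 2 + Q z‖ ^ 2) with hg
  have hgm : Measurable g := by
    have hc : ContinuousOn (fun z => ENNReal.ofReal (‖-1 / z ^ 2 + Q z‖ ^ 2)) A := by
      apply ENNReal.continuous_ofReal.comp_continuousOn
      have hQA : ContinuousOn Q A := hQ.continuousOn.mono (fun z hz => by
        simp only [hA, mem_ofPred_eq] at hz; simp; linarith)
      have : ContinuousOn (fun z : ℂ => -1 / z ^ 2) A := by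
        apply ContinuousOn.div (by fun_prop) (by fun_prop)
        intro z hz
        have : z ≠ 0 := by
          intro h; simp only [hA, mem_ofPred_eq, h, norm_zero] at hz; linarith
        positivity
      fun_prop
    have := hc.measurable_piecewise (g := fun _ => (0 : ENNReal)) continuousOn_const hms
    rw [hg, ← piecewise_eq_indicator]
    exact this
  have hsm : Measurable (fun p : ℝ × ℝ => Complex.polarCoord.symm p) := by
    simp only [Complex.polarCoord_symm_apply]
    fun_prop
  rw [polarCoord_target, MeasureTheory.Measure.volume_eq_prod, ← MeasureTheory.Measure.prod_restrict,
    MeasureTheory.lintegral_prod _ (by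
      apply Measurable.aemeasurable
      exact (ENNReal.measurable_ofReal.comp measurable_fst).mul (hgm.comp hsm))]
  have hIoo : Ioo ρ r ⊆ Ioi (0:ℝ) := fun t ht => lt_trans h0 ht.1
  refine le_trans ?_ (MeasureTheory.lintegral_mono_set hIoo)
  have hstep : ∫⁻ t in Ioo ρ r, ENNReal.ofReal (2 * Real.pi * (t⁻¹ ^ 3 + ‖Q 0‖ ^ 2 * t)) ≤
      ∫⁻ x in Ioo ρ r, ∫⁻ y in Ioo (-Real.pi) Real.pi,
        ENNReal.ofReal (x, y).1 • g (Complex.polarCoord.symm (x, y)) := by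
    apply MeasureTheory.setLIntegral_mono' measurableSet_Ioo
    intro t ht
    have ht0 : 0 < t := h0.trans ht.1
    have hcl := circle_lint Q hQ t ht0 (ht.2.trans h2)
    have heq : ∀ θ : ℝ, g (Complex.polarCoord.symm (t, θ)) =
        ENNReal.ofReal (‖-1 / (circleMap 0 t θ) ^ 2 + Q (circleMap 0 t θ)‖ ^ 2) := by
      intro θ
      have e1 : Complex.polarCoord.symm (t, θ) = circleMap 0 t θ := by
        simp [circleMap, Complex.exp_mul_I]
      have e2 : circleMap 0 t θ ∈ A := by
        have : ‖circleMap 0 t θ‖ = t := by simp [circleMap, abs_of_pos ht0]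
        rw [hA, mem_ofPred_eq, this]; exact ht
      rw [e1, hg, indicator_of_mem e2]
    simp only [heq, smul_eq_mul]
    rw [MeasureTheory.lintegral_const_mul' _ _ ENNReal.ofReal_ne_top]
    refine le_trans (le_of_eq ?_) (mul_le_mul_right hcl _)
    rw [← ENNReal.ofReal_mul ht0.le]
    congr 1
    field_simp
  refine le_trans ?_ hstep
  have hcont : ContinuousOn (fun t : ℝ => 2 * Real.pi * (t⁻¹ ^ 3 + ‖Q 0‖ ^ 2 * t)) (Icc ρ r) := by
    have : ∀ t ∈ Icc ρ r, t ≠ 0 := fun t ht => (lt_of_lt_of_le h0 ht.1).ne'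
    fun_prop (disch := assumption)
  rw [← MeasureTheory.ofReal_integral_eq_lintegral_ofReal
    (hcont.integrableOn_Icc.mono_set Ioo_subset_Icc_self)
    ((MeasureTheory.ae_restrict_iff' measurableSet_Ioo).2 (Filter.Eventually.of_forall fun t ht => by
      have : 0 < t := h0.trans ht.1
      positivity))]
  apply ENNReal.ofReal_le_ofReal
  rw [← MeasureTheory.integral_Ioc_eq_integral_Ioo, ← intervalIntegral.integral_of_le h1.le]
  apply le_of_eq
  symm
  have hr : 0 < r := h0.trans h1
  rw [intervalIntegral.integral_eq_sub_of_hasDerivAt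
    (f := fun t => Real.pi * (- t⁻¹ ^ 2 + ‖Q 0‖ ^ 2 * t ^ 2))]
  · field_simp; ring
  · intro t ht
    rw [uIcc_of_le h1.le] at ht
    have ht0 : t ≠ 0 := (lt_of_lt_of_le h0 ht.1).ne'
    have := ((((hasDerivAt_inv ht0).pow 2).neg).add
      (((hasDerivAt_id t).pow 2).const_mul (‖Q 0‖ ^ 2))).const_mul Real.pi
    refine HasDerivAt.congr_deriv this ?_
    simp only [id, Nat.cast_ofNat, mul_one]
    norm_num
    field_simp
  · apply ContinuousOn.intervalIntegrable
    rwa [uIcc_of_le h1.le]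

lemma contain_real (t ρ b C : ℝ) (hρ : 0 < ρ) (ht : ρ ≤ t) (ht1 : t ≤ 1) (hb : 0 ≤ b) (hC : 0 ≤ C)
    (h : 2 * ρ * (b + C) ≤ 1) :
    1 / t + b * (t ^ 2 - ρ ^ 2) / t + C * t ^ 2 ≤ 1 / ρ + C * ρ ^ 2 := by
  have ht0 : 0 < t := hρ.trans_le ht
  have key : 1 / ρ + C * ρ ^ 2 - (1 / t + b * (t ^ 2 - ρ ^ 2) / t + C * t ^ 2) =
      (t - ρ) / (ρ * t) * (1 - ρ * (t + ρ) * (b + C * t)) := by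
    field_simp; ring
  have h1 : ρ * (t + ρ) * (b + C * t) ≤ ρ * 2 * (b + C) := by
    have : t + ρ ≤ 2 := by linarith
    have : C * t ≤ C := by nlinarith
    gcongr
  have h2 : 0 ≤ (t - ρ) / (ρ * t) * (1 - ρ * (t + ρ) * (b + C * t)) :=
    mul_nonneg (div_nonneg (by linarith) (by positivity)) (by linarith)
  linarith

lemma contain (z b e : ℂ) (ρ C : ℝ) (hρ : 0 < ρ) (ht : ρ ≤ ‖z‖) (ht1 : ‖z‖ ≤ 1) (hC : 0 ≤ C)
    (he : ‖e‖ ≤ C * ‖z‖ ^ 2)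
    (h : 2 * ρ * (‖b‖ + (C * (1 + ‖b‖) + ‖b‖ ^ 2)) ≤ 1) :
    ‖rlin 1 (-(b * (ρ : ℂ) ^ 2)) (1 / z + (b * z + e))‖ ≤
      1 / ρ + (C * (1 + ‖b‖) + ‖b‖ ^ 2) * ρ ^ 2 := by
  refine le_trans ?_ (contain_real ‖z‖ ρ ‖b‖ _ hρ ht ht1 (norm_nonneg _) (by positivity) h)
  set t := ‖z‖ with htdef
  have ht0 : 0 < t := hρ.trans_le ht
  have hz : z ≠ 0 := norm_pos_iff.1 ht0
  have hcz : (starRingEnd ℂ) z ≠ 0 := by simpa using hz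
  have hzz : z * (starRingEnd ℂ) z = (t : ℂ) ^ 2 := by
    rw [Complex.mul_conj, Complex.normSq_eq_norm_sq]; push_cast; rfl
  have e1 : rlin 1 (-(b * (ρ : ℂ) ^ 2)) (1 / z + (b * z + e)) =
      1 / z + b * ((t ^ 2 - ρ ^ 2 : ℝ) : ℂ) / (starRingEnd ℂ) z +
        (e - b * (ρ : ℂ) ^ 2 * (starRingEnd ℂ) (b * z) - b * (ρ : ℂ) ^ 2 * (starRingEnd ℂ) e) := by
    rw [rlin_apply]
    push_cast
    rw [← hzz]
    simp only [map_add, map_div₀, map_one, map_mul]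
    field_simp
    ring
  rw [e1]
  have hρt : ρ ^ 2 ≤ t ^ 2 := by gcongr
  have n1 : ‖1 / z‖ = 1 / t := by rw [norm_div, norm_one]
  have n2 : ‖b * ((t ^ 2 - ρ ^ 2 : ℝ) : ℂ) / (starRingEnd ℂ) z‖ = ‖b‖ * (t ^ 2 - ρ ^ 2) / t := by
    rw [norm_div, norm_mul, Complex.norm_real, Real.norm_of_nonneg (by linarith), RCLike.norm_conj]
  have n3 : ‖b * (ρ : ℂ) ^ 2 * (starRingEnd ℂ) (b * z)‖ = ‖b‖ ^ 2 * (ρ ^ 2 * t) := by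
    rw [norm_mul, RCLike.norm_conj, norm_mul, norm_mul, norm_pow, Complex.norm_real,
      Real.norm_of_nonneg hρ.le]; ring
  have n4 : ‖b * (ρ : ℂ) ^ 2 * (starRingEnd ℂ) e‖ = ‖b‖ * (ρ ^ 2 * ‖e‖) := by
    rw [norm_mul, RCLike.norm_conj, norm_mul, norm_pow, Complex.norm_real,
      Real.norm_of_nonneg hρ.le]; ring
  have hρ1 : ρ ^ 2 ≤ 1 := by nlinarith
  have m3 : ρ ^ 2 * t ≤ t ^ 2 := by nlinarith
  have m4 : ρ ^ 2 * ‖e‖ ≤ C * t ^ 2 := le_trans (mul_le_of_le_one_left (norm_nonneg _) hρ1) he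
  calc _ ≤ ‖1 / z‖ + ‖b * ((t ^ 2 - ρ ^ 2 : ℝ) : ℂ) / (starRingEnd ℂ) z‖ +
        (‖e‖ + ‖b * (ρ : ℂ) ^ 2 * (starRingEnd ℂ) (b * z)‖ + ‖b * (ρ : ℂ) ^ 2 * (starRingEnd ℂ) e‖) := by
        refine (norm_add_le _ _).trans ?_
        gcongr
        · exact norm_add_le _ _
        · refine (norm_sub_le _ _).trans ?_
          gcongr
          exact norm_sub_le _ _
    _ ≤ _ := by
        rw [n1, n2, n3, n4]
        have := mul_le_mul_of_nonneg_left m3 (sq_nonneg ‖b‖)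
        have := mul_le_mul_of_nonneg_left m4 (norm_nonneg b)
        nlinarith

lemma rem_bound (q : ℂ → ℂ) (hq : DifferentiableOn ℂ q (ball 0 1)) (hq0 : q 0 = 0) (r : ℝ)
    (hr1 : r < 1) : ∃ C : ℝ, 0 ≤ C ∧ ∀ z : ℂ, ‖z‖ ≤ r → ‖q z - deriv q 0 * z‖ ≤ C * ‖z‖ ^ 2 := by
  have hn : ball (0 : ℂ) 1 ∈ nhds (0 : ℂ) := ball_mem_nhds _ one_pos
  have h1 := (Complex.differentiableOn_dslope hn).2 hq
  have h2 := (Complex.differentiableOn_dslope hn).2 h1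
  obtain ⟨C, hC⟩ := (isCompact_closedBall (0 : ℂ) r).exists_bound_of_continuousOn
    (h2.continuousOn.mono (closedBall_subset_ball hr1))
  refine ⟨max C 0, le_max_right _ _, fun z hz => ?_⟩
  have e : q z - deriv q 0 * z = z ^ 2 * dslope (dslope q 0) 0 z := by
    have a1 := sub_smul_dslope q 0 z
    have a2 := sub_smul_dslope (dslope q 0) 0 z
    rw [dslope_same] at a2
    simp only [sub_zero, smul_eq_mul, hq0] at a1 a2
    linear_combination -a1 - z * a2
  rw [e, norm_mul, norm_pow, mul_comm]
  gcongr
  exact (hC z (by simpa using hz)).trans (le_max_left _ _)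

lemma area_ineq (q : ℂ → ℂ) (hq : DifferentiableOn ℂ q (ball 0 1)) (hq0 : q 0 = 0)
    (hinj : InjOn (fun z : ℂ => 1 / z + q z) (ball 0 1 \ {0})) (r ρ C : ℝ) (hr1 : r < 1)
    (hC : 0 ≤ C) (hCb : ∀ z : ℂ, ‖z‖ ≤ r → ‖q z - deriv q 0 * z‖ ≤ C * ‖z‖ ^ 2)
    (hρ : 0 < ρ) (hρr : ρ < r)
    (hsm : 2 * ρ * (‖deriv q 0‖ + (C * (1 + ‖deriv q 0‖) + ‖deriv q 0‖ ^ 2)) ≤ 1) :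
    (1 - ‖deriv q 0‖ ^ 2 * ρ ^ 4) * ((1 / ρ ^ 2 - 1 / r ^ 2) + ‖deriv q 0‖ ^ 2 * (r ^ 2 - ρ ^ 2))
      ≤ (1 / ρ + (C * (1 + ‖deriv q 0‖) + ‖deriv q 0‖ ^ 2) * ρ ^ 2) ^ 2 := by
  set b := deriv q 0 with hb
  set A := {z : ℂ | ρ < ‖z‖ ∧ ‖z‖ < r} with hA
  set R := 1 / ρ + (C * (1 + ‖b‖) + ‖b‖ ^ 2) * ρ ^ 2 with hR
  have hR0 : 0 ≤ R := by positivity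
  have hms : MeasurableSet A :=
    ((isOpen_lt continuous_const continuous_norm).inter
      (isOpen_lt continuous_norm continuous_const)).measurableSet
  set c := b * (ρ : ℂ) ^ 2 with hc
  have hcn : ‖c‖ = ‖b‖ * ρ ^ 2 := by
    rw [hc, norm_mul, norm_pow, Complex.norm_real, Real.norm_of_nonneg hρ.le]
  have hc1 : 0 < 1 - ‖c‖ ^ 2 := by
    have : ‖b‖ * ρ ≤ 1 / 2 := by
      have : 0 ≤ ρ * (C * (1 + ‖b‖) + ‖b‖ ^ 2) := by positivity
      nlinarith
    have hρ1 : ρ < 1 := hρr.trans hr1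
    have : ‖c‖ ≤ 1 / 2 := by rw [hcn]; nlinarith [mul_nonneg (norm_nonneg b) hρ.le]
    nlinarith [norm_nonneg c]
  have hAsub : A ⊆ ball 0 1 \ {0} := by
    intro z hz
    rw [hA, mem_ofPred_eq] at hz
    refine ⟨by simp; linarith, ?_⟩
    intro h
    rw [mem_singleton_iff.1 h, norm_zero] at hz
    linarith
  have hMi : Function.Injective (rlin 1 (-c)) := by
    rw [injective_iff_map_eq_zero]
    intro w hw
    rw [rlin_apply, one_mul, neg_mul, ← sub_eq_add_neg, sub_eq_zero] at hw
    have h1 : ‖w‖ = ‖c‖ * ‖w‖ := by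
      conv_lhs => rw [hw]
      rw [norm_mul, RCLike.norm_conj]
    have : ‖c‖ ≠ 1 := by intro h; rw [h] at hc1; norm_num at hc1
    have : (1 - ‖c‖) * ‖w‖ = 0 := by linarith
    rcases mul_eq_zero.1 this with h | h
    · exfalso; apply ‹‖c‖ ≠ 1›; linarith
    · exact norm_eq_zero.1 h
  have hder : ∀ z ∈ A, HasFDerivWithinAt (fun z => rlin 1 (-c) (1 / z + q z))
      (rlin (-1 / z ^ 2 + deriv q z) (-c * (starRingEnd ℂ) (-1 / z ^ 2 + deriv q z))) A z := by
    intro z hz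
    have hz' := hAsub hz
    have hz0 : z ≠ 0 := hz'.2
    have d1 : HasDerivAt (fun z => 1 / z + q z) (-1 / z ^ 2 + deriv q z) z := by
      have := (hasDerivAt_inv hz0).add
        (hq.differentiableAt (isOpen_ball.mem_nhds hz'.1)).hasDerivAt
      have e : (fun z => 1 / z + q z) = (fun y => y⁻¹) + q := by ext w; simp
      rw [e]
      refine this.congr_deriv ?_
      rw [neg_div, one_div]
    have d2 := (rlin 1 (-c)).hasFDerivAt.comp z d1.complexToReal_fderiv
    have : (rlin (-1 / z ^ 2 + deriv q z) (-c * (starRingEnd ℂ) (-1 / z ^ 2 + deriv q z))) =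
      (rlin 1 (-c)).comp ((-1 / z ^ 2 + deriv q z) • (1 : ℂ →L[ℝ] ℂ)) := by
      generalize -1 / z ^ 2 + deriv q z = g
      ext <;> simp [rlin_apply, mul_assoc]
    rw [this]
    exact d2.hasFDerivWithinAt
  have hcv := MeasureTheory.lintegral_abs_det_fderiv_eq_addHaar_image MeasureTheory.volume hms hder
    (fun x hx y hy hxy => hinj (hAsub hx) (hAsub hy) (hMi hxy))
  have hle : MeasureTheory.volume ((fun z => rlin 1 (-c) (1 / z + q z)) '' A) ≤
      MeasureTheory.volume (closedBall (0 : ℂ) R) := by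
    apply MeasureTheory.measure_mono
    rintro _ ⟨z, hz, rfl⟩
    rw [mem_closedBall_zero_iff]
    have hz2 := hz
    rw [hA, mem_ofPred_eq] at hz2
    have := contain z b (q z - b * z) ρ C hρ hz2.1.le (by linarith) hC (hCb z hz2.2.le) hsm
    rw [add_sub_cancel] at this
    exact this
  rw [← hcv] at hle
  have hdet : ∀ z : ℂ, ENNReal.ofReal
      |(rlin (-1 / z ^ 2 + deriv q z) (-c * (starRingEnd ℂ) (-1 / z ^ 2 + deriv q z))).det| =
      ENNReal.ofReal (1 - ‖c‖ ^ 2) * ENNReal.ofReal (‖-1 / z ^ 2 + deriv q z‖ ^ 2) := by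
    intro z
    rw [← ENNReal.ofReal_mul hc1.le, rlin_det, norm_mul, norm_neg, RCLike.norm_conj]
    congr 1
    rw [abs_of_nonneg] <;> nlinarith [mul_nonneg hc1.le (sq_nonneg ‖-1 / z ^ 2 + deriv q z‖)]
  simp only [hdet] at hle
  rw [MeasureTheory.lintegral_const_mul' _ _ ENNReal.ofReal_ne_top] at hle
  have hann := annulus_lint (deriv q) (hq.deriv isOpen_ball) ρ r hρ hρr hr1
  have hfin := (mul_le_mul_right hann (ENNReal.ofReal (1 - ‖c‖ ^ 2))).trans hle
  rw [Complex.volume_closedBall, ← ENNReal.ofReal_mul hc1.le, ← ENNReal.ofReal_pow hR0,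
    ← ENNReal.ofReal_coe_nnreal, ← ENNReal.ofReal_mul (by positivity),
    ENNReal.ofReal_le_ofReal_iff (by positivity), NNReal.coe_real_pi, hcn] at hfin
  have : Real.pi * ((1 - ‖b‖ ^ 2 * ρ ^ 4) * ((1 / ρ ^ 2 - 1 / r ^ 2) + ‖b‖ ^ 2 * (r ^ 2 - ρ ^ 2)))
      ≤ Real.pi * R ^ 2 := by
    refine le_trans (le_of_eq ?_) (hfin.trans (le_of_eq ?_)) <;> ring
  exact le_of_mul_le_mul_left this Real.pi_pos

lemma area_thm (q : ℂ → ℂ) (hq : DifferentiableOn ℂ q (ball 0 1)) (hq0 : q 0 = 0)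
    (hinj : InjOn (fun z : ℂ => 1 / z + q z) (ball 0 1 \ {0})) : ‖deriv q 0‖ ≤ 1 := by
  set b := deriv q 0 with hb
  have step : ∀ r : ℝ, 0 < r → r < 1 → ‖b‖ ^ 2 * r ^ 4 ≤ 1 := by
    intro r hr0 hr1
    obtain ⟨C, hC, hCb⟩ := rem_bound q hq hq0 r hr1
    set K := C * (1 + ‖b‖) + ‖b‖ ^ 2 with hK
    let φ : ℝ → ℝ := fun ρ => -(1 / r ^ 2) + ‖b‖ ^ 2 * (r ^ 2 - ρ ^ 2) - ‖b‖ ^ 2 * ρ ^ 2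
      + ‖b‖ ^ 2 * ρ ^ 4 * (1 / r ^ 2) - ‖b‖ ^ 4 * ρ ^ 4 * (r ^ 2 - ρ ^ 2) - 2 * K * ρ - K ^ 2 * ρ ^ 4
    have hev : ∀ᶠ ρ in nhdsWithin (0 : ℝ) (Ioi 0), φ ρ ≤ 0 := by
      have hK0 : 0 ≤ ‖b‖ + K := by positivity
      have h1 : ∀ᶠ ρ in nhdsWithin (0 : ℝ) (Ioi 0), 2 * ρ * (‖b‖ + K) < 1 := by
        apply nhdsWithin_le_nhds
        exact (by fun_prop : Continuous fun ρ : ℝ => 2 * ρ * (‖b‖ + K)).continuousAt.eventually_lt_const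
          (by simp)
      have h2 : ∀ᶠ ρ in nhdsWithin (0 : ℝ) (Ioi 0), ρ < r :=
        nhdsWithin_le_nhds (gt_mem_nhds hr0)
      filter_upwards [h1, h2, self_mem_nhdsWithin] with ρ h1 h2 h3
      have h3' : 0 < ρ := h3
      have := area_ineq q hq hq0 hinj r ρ C hr1 hC hCb h3' h2 h1.le
      rw [← hb, ← hK] at this
      have e : φ ρ = (1 - ‖b‖ ^ 2 * ρ ^ 4) * ((1 / ρ ^ 2 - 1 / r ^ 2) + ‖b‖ ^ 2 * (r ^ 2 - ρ ^ 2))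
        - (1 / ρ + K * ρ ^ 2) ^ 2 := by
        simp only [φ]
        field_simp
        ring
      linarith
    have hφ : Filter.Tendsto φ (nhdsWithin (0 : ℝ) (Ioi 0)) (nhds (φ 0)) := by
      apply Filter.Tendsto.mono_left _ nhdsWithin_le_nhds
      exact (by fun_prop : Continuous φ).tendsto 0
    have := le_of_tendsto hφ hev
    simp only [φ] at this
    norm_num at this
    have h4 : ‖b‖ ^ 2 * r ^ 2 ≤ (r ^ 2)⁻¹ := by linarith
    calc ‖b‖ ^ 2 * r ^ 4 = ‖b‖ ^ 2 * r ^ 2 * r ^ 2 := by ring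
      _ ≤ (r ^ 2)⁻¹ * r ^ 2 := by gcongr
      _ = 1 := by field_simp
  have hlim : Filter.Tendsto (fun r : ℝ => ‖b‖ ^ 2 * r ^ 4) (nhdsWithin 1 (Iio 1))
      (nhds (‖b‖ ^ 2 * 1 ^ 4)) := by
    apply Filter.Tendsto.mono_left _ nhdsWithin_le_nhds
    exact (by fun_prop : Continuous fun r : ℝ => ‖b‖ ^ 2 * r ^ 4).tendsto 1
  have : ‖b‖ ^ 2 * 1 ^ 4 ≤ 1 := by
    apply le_of_tendsto hlim
    filter_upwards [self_mem_nhdsWithin, nhdsWithin_le_nhds (lt_mem_nhds one_pos)] with r h1 h2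
    exact step r h2 h1
  nlinarith [norm_nonneg b]

lemma exists_inv_sqrt (k : ℂ → ℂ) (hk : DifferentiableOn ℂ k (ball 0 1)) (hk0 : k 0 = 1)
    (hne : ∀ z ∈ ball (0 : ℂ) 1, k z ≠ 0) :
    ∃ σ : ℂ → ℂ, DifferentiableOn ℂ σ (ball 0 1) ∧ σ 0 = 1 ∧
      (∀ z ∈ ball (0 : ℂ) 1, σ z ^ 2 * k z = 1) ∧ deriv σ 0 = -deriv k 0 / 2 := by
  have h0 : (0 : ℂ) ∈ ball (0 : ℂ) 1 := mem_ball_self one_pos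
  have hd : DifferentiableOn ℂ (fun z => deriv k z / k z) (ball 0 1) :=
    (hk.deriv isOpen_ball).div hk hne
  obtain ⟨L, hL0, hL⟩ := hd.isExactOn_ball.with_val_at 0 0
  have hσ : ∀ z ∈ ball (0 : ℂ) 1, HasDerivAt (fun z => Complex.exp (-L z / 2))
      (Complex.exp (-L z / 2) * (-(deriv k z / k z) / 2)) z := fun z hz =>
    ((hL z hz).neg.div_const 2).cexp
  refine ⟨fun z => Complex.exp (-L z / 2), fun z hz =>
    (hσ z hz).differentiableAt.differentiableWithinAt, by simp [hL0], ?_, ?_⟩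
  · intro z hz
    have hP : ∀ z ∈ ball (0 : ℂ) 1, HasDerivAt (fun z => Complex.exp (-L z / 2) ^ 2 * k z) 0 z := by
      intro z hz
      have := ((hσ z hz).pow 2).mul (hk.differentiableAt (isOpen_ball.mem_nhds hz)).hasDerivAt
      refine this.congr_deriv ?_
      have := hne z hz
      simp
      field_simp
      ring
    have := (convex_ball (0 : ℂ) 1).is_const_of_fderivWithin_eq_zero (𝕜 := ℂ)
      (f := fun z => Complex.exp (-L z / 2) ^ 2 * k z)
      (fun z hz => (hP z hz).differentiableAt.differentiableWithinAt)
      (fun z hz => by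
        rw [fderivWithin_of_isOpen isOpen_ball hz]
        have := (hP z hz).hasFDerivAt.fderiv
        rw [this]; ext; simp) hz h0
    rw [this]
    simp [hL0, hk0]
  · rw [(hσ 0 h0).deriv]
    simp [hL0, hk0]

lemma bieberbach (h : ℂ → ℂ) (hd : DifferentiableOn ℂ h (ball 0 1)) (hi : InjOn h (ball 0 1))
    (h00 : h 0 = 0) (h01 : deriv h 0 = 1) : ‖deriv (deriv h) 0‖ ≤ 4 := by
  have h0 : (0 : ℂ) ∈ ball (0 : ℂ) 1 := mem_ball_self one_pos
  have hn : ball (0 : ℂ) 1 ∈ nhds (0 : ℂ) := ball_mem_nhds _ one_pos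
  set k := dslope h 0 with hk
  have hkd : DifferentiableOn ℂ k (ball 0 1) := (Complex.differentiableOn_dslope hn).2 hd
  have hk0 : k 0 = 1 := by rw [hk, dslope_same, h01]
  have hzk : ∀ z, h z = z * k z := by
    intro z
    have := sub_smul_dslope h 0 z
    simp only [sub_zero, smul_eq_mul, h00] at this
    exact this.symm
  have hne : ∀ z ∈ ball (0 : ℂ) 1, k z ≠ 0 := by
    intro z hz hkz
    by_cases hz0 : z = 0
    · rw [hz0, hk0] at hkz; exact one_ne_zero hkz
    · apply hz0
      apply hi hz h0
      rw [hzk z, hkz, h00, mul_zero]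
  obtain ⟨σ, hσd, hσ0, hσk, hσ'⟩ := exists_inv_sqrt k hkd hk0 hne
  set m := dslope σ 0 with hm
  have hmd : DifferentiableOn ℂ m (ball 0 1) := (Complex.differentiableOn_dslope hn).2 hσd
  have hσm : ∀ w, σ w = 1 + w * m w := by
    intro w
    have := sub_smul_dslope σ 0 w
    simp only [sub_zero, smul_eq_mul, hσ0] at this
    rw [hm, this]; ring
  have hsq : MapsTo (fun z : ℂ => z ^ 2) (ball 0 1) (ball 0 1) := by
    intro z hz
    simp only [mem_ball_zero_iff, norm_pow] at hz ⊢
    exact pow_lt_one₀ (norm_nonneg _) hz two_ne_zero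
  let q : ℂ → ℂ := fun z => z * m (z ^ 2)
  have hm2 : DifferentiableOn ℂ (fun z => m (z ^ 2)) (ball 0 1) :=
    hmd.comp (by fun_prop) hsq
  have hqd : DifferentiableOn ℂ q (ball 0 1) := differentiableOn_id.mul hm2
  have hq' : deriv q 0 = m 0 := by
    have := (hasDerivAt_id (0 : ℂ)).mul (hm2.differentiableAt hn).hasDerivAt
    refine (this.congr_deriv ?_).deriv
    simp
  have hG : ∀ z : ℂ, z ≠ 0 → 1 / z + q z = σ (z ^ 2) / z := by
    intro z hz
    rw [hσm]
    simp only [q]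
    field_simp
  have hinj : InjOn (fun z : ℂ => 1 / z + q z) (ball 0 1 \ {0}) := by
    intro z hz w hw hzw
    have hz0 : z ≠ 0 := hz.2
    have hw0 : w ≠ 0 := hw.2
    have hz1 := hsq hz.1
    have hw1 := hsq hw.1
    simp only at hz1 hw1
    simp only [hG z hz0, hG w hw0] at hzw
    have sz := hσk _ hz1
    have sw := hσk _ hw1
    have hzσ : σ (z ^ 2) ≠ 0 := by intro h; rw [h] at sz; simp at sz
    have e1 : (σ (z ^ 2) / z) ^ 2 * h (z ^ 2) = 1 := by
      rw [hzk, div_pow, ← sz]; field_simp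
    have e2 : (σ (w ^ 2) / w) ^ 2 * h (w ^ 2) = 1 := by
      rw [hzk, div_pow, ← sw]; field_simp
    have e3 : h (z ^ 2) = h (w ^ 2) := by
      rw [hzw] at e1
      have : (σ (w ^ 2) / w) ^ 2 ≠ 0 := by intro h; rw [h] at e2; simp at e2
      exact mul_left_cancel₀ this (e1.trans e2.symm)
    have e4 : z ^ 2 = w ^ 2 := hi hz1 hw1 e3
    rcases sq_eq_sq_iff_eq_or_eq_neg.1 e4 with h | h
    · exact h
    · exfalso
      have hw' : w = -z := by rw [h, neg_neg]
      rw [← e4, hw', div_neg] at hzw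
      have : σ (z ^ 2) / z = 0 := by linear_combination hzw / 2
      exact div_ne_zero hzσ hz0 this
  have hfin := area_thm q hqd (by simp [q]) hinj
  rw [hq', hm, dslope_same, hσ', norm_div, norm_neg] at hfin
  have hk2 : ‖deriv k 0‖ ≤ 2 := by
    simp at hfin
    linarith
  have hdh : deriv h =ᶠ[nhds 0] fun z => k z + z * deriv k z := by
    filter_upwards [hn] with z hz
    have he : h = fun z => z * k z := funext hzk
    have := (hasDerivAt_id z).mul (hkd.differentiableAt (isOpen_ball.mem_nhds hz)).hasDerivAt
    rw [he]
    refine (this.congr_deriv ?_).deriv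
    simp
  have hdd : deriv (deriv h) 0 = 2 * deriv k 0 := by
    rw [hdh.deriv_eq]
    have := (hkd.differentiableAt hn).hasDerivAt.add ((hasDerivAt_id (0 : ℂ)).mul
      ((hkd.deriv isOpen_ball).differentiableAt hn).hasDerivAt)
    refine (this.congr_deriv ?_).deriv
    simp; ring
  rw [hdd, norm_mul]
  simp; linarith

lemma koebe_ineq (h : ℂ → ℂ) (hd : DifferentiableOn ℂ h (ball 0 1)) (hi : InjOn h (ball 0 1))
    (r : ℝ) (hr0 : 0 ≤ r) (hr1 : r < 1) (hne : deriv h r ≠ 0) :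
    ‖(1 - (r : ℂ) ^ 2) * deriv (deriv h) r - 2 * r * deriv h r‖ ≤ 4 * ‖deriv h r‖ := by
  have hn : ball (0 : ℂ) 1 ∈ nhds (0 : ℂ) := ball_mem_nhds _ one_pos
  have h0 : (0 : ℂ) ∈ ball (0 : ℂ) 1 := mem_ball_self one_pos
  have hr2 : (1 - (r : ℂ) ^ 2) ≠ 0 := by
    have : (0 : ℝ) < 1 - r ^ 2 := by nlinarith
    exact_mod_cast this.ne'
  have hden : ∀ z ∈ ball (0 : ℂ) 1, 1 + (r : ℂ) * z ≠ 0 := by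
    intro z hz hh
    rw [mem_ball_zero_iff] at hz
    have : (r : ℂ) * z = -1 := by linear_combination hh
    have h2 : ‖(r : ℂ) * z‖ = 1 := by rw [this]; simp
    rw [norm_mul, Complex.norm_real, Real.norm_of_nonneg hr0] at h2
    nlinarith [norm_nonneg z]
  let T : ℂ → ℂ := fun z => (z + r) / (1 + r * z)
  have hT : MapsTo T (ball 0 1) (ball 0 1) := by
    intro z hz
    have hdz := hden z hz
    rw [mem_ball_zero_iff] at hz ⊢
    simp only [T]
    rw [norm_div, div_lt_one (norm_pos_iff.2 hdz)]
    apply lt_of_pow_lt_pow_left₀ 2 (norm_nonneg _)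
    have hz2 : ‖z‖ ^ 2 < 1 := by nlinarith [norm_nonneg z]
    rw [Complex.sq_norm, Complex.normSq_apply] at hz2 ⊢
    rw [Complex.sq_norm, Complex.normSq_apply]
    simp
    nlinarith [mul_pos (show (0:ℝ) < 1 - r ^ 2 by nlinarith) (sub_pos.2 hz2)]
  have hTd : ∀ z ∈ ball (0 : ℂ) 1, HasDerivAt T ((1 - (r : ℂ) ^ 2) / (1 + r * z) ^ 2) z := by
    intro z hz
    have := ((hasDerivAt_id z).add_const (r : ℂ)).div
      (((hasDerivAt_id z).const_mul (r : ℂ)).const_add 1) (hden z hz)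
    refine this.congr_deriv ?_
    simp only [id]
    ring
  have hTi : InjOn T (ball 0 1) := by
    intro z hz w hw hzw
    simp only [T] at hzw
    rw [div_eq_div_iff (hden z hz) (hden w hw)] at hzw
    have : (1 - (r : ℂ) ^ 2) * (z - w) = 0 := by linear_combination hzw
    rcases mul_eq_zero.1 this with h | h
    · exact absurd h hr2
    · exact sub_eq_zero.1 h
  have hT0 : T 0 = r := by simp [T]
  set c := (1 - (r : ℂ) ^ 2) * deriv h r with hc
  have hc0 : c ≠ 0 := mul_ne_zero hr2 hne
  let H : ℂ → ℂ := fun z => (h (T z) - h r) / c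
  have hHd : ∀ z ∈ ball (0 : ℂ) 1,
      HasDerivAt H (deriv h (T z) * ((1 - (r : ℂ) ^ 2) / (1 + r * z) ^ 2) / c) z := by
    intro z hz
    have := ((hd.differentiableAt (isOpen_ball.mem_nhds (hT hz))).hasDerivAt.comp z (hTd z hz))
    exact (this.sub_const _).div_const c
  have hb := bieberbach H (fun z hz => (hHd z hz).differentiableAt.differentiableWithinAt)
    (by
      intro z hz w hw hzw
      simp only [H] at hzw
      rw [div_left_inj' hc0, sub_left_inj] at hzw
      exact hTi hz hw (hi (hT hz) (hT hw) hzw))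
    (by simp [H, hT0])
    (by
      rw [(hHd 0 h0).deriv, hT0, hc]
      simp
      field_simp)
  have hev : deriv H =ᶠ[nhds 0] fun z => deriv h (T z) * ((1 - (r : ℂ) ^ 2) / (1 + r * z) ^ 2) / c := by
    filter_upwards [hn] with z hz
    exact (hHd z hz).deriv
  have hTr : (r : ℂ) ∈ ball (0 : ℂ) 1 := by rw [← hT0]; exact hT h0
  have h2 : HasDerivAt (fun z => deriv h (T z) * ((1 - (r : ℂ) ^ 2) / (1 + r * z) ^ 2) / c)
      (((1 - (r : ℂ) ^ 2) * deriv (deriv h) r - 2 * r * deriv h r) / deriv h r) 0 := by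
    have a1 : HasDerivAt (deriv h) (deriv (deriv h) r) (T 0) := by
      rw [hT0]
      exact ((hd.deriv isOpen_ball).differentiableAt (isOpen_ball.mem_nhds hTr)).hasDerivAt
    have a2 := a1.comp 0 (hTd 0 h0)
    have a3 := (hasDerivAt_const (0 : ℂ) (1 - (r : ℂ) ^ 2)).div
      ((((hasDerivAt_id (0 : ℂ)).const_mul (r : ℂ)).const_add 1).pow 2) (by simp)
    refine ((a2.mul a3).div_const c).congr_deriv ?_
    simp [hT0, hc]
    field_simp
    ring
  rw [hev.deriv_eq, h2.deriv, norm_div, div_le_iff₀ (norm_pos_iff.2 hne)] at hb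
  exact hb

lemma distortion (h : ℂ → ℂ) (hd : DifferentiableOn ℂ h (ball 0 1)) (hi : InjOn h (ball 0 1))
    (h01 : deriv h 0 = 1) (hne : ∀ z ∈ ball (0 : ℂ) 1, deriv h z ≠ 0)
    (r : ℝ) (hr0 : 0 ≤ r) (hr1 : r < 1) :
    (1 - r) / (1 + r) ^ 3 ≤ ‖deriv h r‖ ∧ ‖deriv h r‖ ≤ (1 + r) / (1 - r) ^ 3 := by
  have hmem : ∀ t ∈ Ico (0 : ℝ) 1, (t : ℂ) ∈ ball (0 : ℂ) 1 := by
    intro t ht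
    rw [mem_ball_zero_iff, Complex.norm_real, Real.norm_of_nonneg ht.1]; exact ht.2
  let p : ℝ → ℝ := fun t => ‖deriv h t‖ ^ 2
  have hp : ∀ t ∈ Ico (0 : ℝ) 1, ∃ p', HasDerivAt p p' t ∧
      (4 * t - 8) * p t ≤ (1 - t ^ 2) * p' ∧ (1 - t ^ 2) * p' ≤ (4 * t + 8) * p t := by
    intro t ht
    have a1 : HasDerivAt (deriv h) (deriv (deriv h) t) (t : ℂ) :=
      ((hd.deriv isOpen_ball).differentiableAt (isOpen_ball.mem_nhds (hmem t ht))).hasDerivAt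
    have a2 := a1.comp_ofReal.norm_sq
    refine ⟨_, a2, ?_⟩
    have hk := koebe_ineq h hd hi t ht.1 ht.2 (hne _ (hmem t ht))
    simp only [p]
    set u := deriv h t
    set v := deriv (deriv h) t
    have b1 : |((starRingEnd ℂ) u * ((1 - (t : ℂ) ^ 2) * v - 2 * t * u)).re| ≤ 4 * ‖u‖ ^ 2 := by
      refine (Complex.abs_re_le_norm _).trans ?_
      rw [norm_mul, RCLike.norm_conj]
      nlinarith [norm_nonneg u]
    have b2 : ((starRingEnd ℂ) u * ((1 - (t : ℂ) ^ 2) * v - 2 * t * u)).re =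
        (1 - t ^ 2) * inner ℝ u v - 2 * t * ‖u‖ ^ 2 := by
      have e : (starRingEnd ℂ) u * ((1 - (t : ℂ) ^ 2) * v - 2 * t * u) =
        ((1 - t ^ 2 : ℝ) : ℂ) * ((starRingEnd ℂ) u * v) -
          ((2 * t : ℝ) : ℂ) * ((starRingEnd ℂ) u * u) := by push_cast; ring
      rw [e, Complex.sub_re, Complex.re_ofReal_mul, Complex.re_ofReal_mul, Complex.inner,
        Complex.sq_norm, Complex.normSq_apply]
      simp
      left; ring
    rw [b2, abs_le] at b1
    constructor <;> nlinarith [b1.1, b1.2]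
  have hint : interior (Ico (0:ℝ) 1) ⊆ Ico (0:ℝ) 1 := interior_subset
  have hp0 : ∀ t, 0 ≤ p t := fun t => by positivity
  have hU : MonotoneOn (fun t => p t * ((1 + t) ^ 6 / (1 - t) ^ 2)) (Ico (0:ℝ) 1) := by
    have key : ∀ t ∈ Ico (0 : ℝ) 1, ∃ d, HasDerivAt (fun t => p t * ((1 + t) ^ 6 / (1 - t) ^ 2)) d t
        ∧ 0 ≤ d := by
      intro t ht
      obtain ⟨p', hp', hlo, hhi⟩ := hp t ht
      have h1t : 0 < 1 - t := sub_pos.2 ht.2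
      have h1t' : 0 < 1 + t := by linarith [ht.1]
      have a := hp'.mul ((((hasDerivAt_id t).const_add 1).pow 6).div
        (((hasDerivAt_id t).const_sub 1).pow 2) (by simp; linarith))
      refine ⟨_, a, ?_⟩
      have : 0 ≤ ((1 - t ^ 2) * p' - (4 * t - 8) * p t) * ((1 + t) ^ 5 / (1 - t) ^ 3) :=
        mul_nonneg (by linarith) (by positivity)
      refine this.trans (le_of_eq ?_)
      simp
      field_simp
      ring
    choose! d hd1 hd2 using key
    apply monotoneOn_of_deriv_nonneg (convex_Ico 0 1)
    · exact fun t ht => (hd1 t ht).continuousAt.continuousWithinAt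
    · exact fun t ht => (hd1 t (hint ht)).differentiableAt.differentiableWithinAt
    · intro t ht
      rw [(hd1 t (hint ht)).deriv]
      exact hd2 t (hint ht)
  have hV : AntitoneOn (fun t => p t * ((1 - t) ^ 6 / (1 + t) ^ 2)) (Ico (0:ℝ) 1) := by
    have key : ∀ t ∈ Ico (0 : ℝ) 1, ∃ d, HasDerivAt (fun t => p t * ((1 - t) ^ 6 / (1 + t) ^ 2)) d t
        ∧ d ≤ 0 := by
      intro t ht
      obtain ⟨p', hp', hlo, hhi⟩ := hp t ht
      have h1t : 0 < 1 - t := sub_pos.2 ht.2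
      have h1t' : 0 < 1 + t := by linarith [ht.1]
      have a := hp'.mul ((((hasDerivAt_id t).const_sub 1).pow 6).div
        (((hasDerivAt_id t).const_add 1).pow 2) (by simp; linarith))
      refine ⟨_, a, ?_⟩
      have : ((1 - t ^ 2) * p' - (4 * t + 8) * p t) * ((1 - t) ^ 5 / (1 + t) ^ 3) ≤ 0 :=
        mul_nonpos_of_nonpos_of_nonneg (by linarith) (by positivity)
      refine le_trans (le_of_eq ?_) this
      simp
      field_simp
      ring
    choose! d hd1 hd2 using key
    apply antitoneOn_of_deriv_nonpos (convex_Ico 0 1)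
    · exact fun t ht => (hd1 t ht).continuousAt.continuousWithinAt
    · exact fun t ht => (hd1 t (hint ht)).differentiableAt.differentiableWithinAt
    · intro t ht
      rw [(hd1 t (hint ht)).deriv]
      exact hd2 t (hint ht)
  have i0 : (0 : ℝ) ∈ Ico (0 : ℝ) 1 := ⟨le_rfl, one_pos⟩
  have ir : r ∈ Ico (0 : ℝ) 1 := ⟨hr0, hr1⟩
  have u1 := hU i0 ir hr0
  have v1 := hV i0 ir hr0
  have hr1' : 0 < 1 - r := by linarith
  have hr2' : 0 < 1 + r := by linarith
  simp [p, h01] at u1 v1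
  constructor
  · refine (sq_le_sq₀ (by positivity) (norm_nonneg _)).1 ?_
    calc ((1 - r) / (1 + r) ^ 3) ^ 2 = 1 * ((1 - r) ^ 2 / (1 + r) ^ 6) := by
          field_simp
      _ ≤ (‖deriv h r‖ ^ 2 * ((1 + r) ^ 6 / (1 - r) ^ 2)) * ((1 - r) ^ 2 / (1 + r) ^ 6) := by
          gcongr
      _ = _ := by field_simp
  · refine (sq_le_sq₀ (by positivity) (by positivity)).1 ?_
    calc ‖deriv h r‖ ^ 2 = (‖deriv h r‖ ^ 2 * ((1 - r) ^ 6 / (1 + r) ^ 2)) * ((1 + r) ^ 2 / (1 - r) ^ 6) := by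
          field_simp
      _ ≤ 1 * ((1 + r) ^ 2 / (1 - r) ^ 6) := by
          gcongr
      _ = _ := by field_simp

/-- **Distortion theorem along `x`.** Let `F(x) = f(x)·x` be biholomorphic on the unit ball
`𝔹` of a complex Banach space, with `f` holomorphic and `f(0) = 1`. Then for all `x ∈ 𝔹`,
`‖x‖(1−‖x‖)/(1+‖x‖)³ ≤ ‖DF(x)x‖ ≤ ‖x‖(1+‖x‖)/(1−‖x‖)³`. -/
theorem stmt8 {X : Type*} [NormedAddCommGroup X] [NormedSpace ℂ X] [CompleteSpace X]
    (f : X → ℂ) (hf : DifferentiableOn ℂ f (ball (0 : X) 1)) (hf0 : f 0 = 1)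
    (F : X → X) (hF : ∀ x ∈ ball (0 : X) 1, F x = f x • x)
    (hbi : IsBiholoOn F (ball (0 : X) 1)) :
    ∀ x ∈ ball (0 : X) 1,
      ‖x‖ * (1 - ‖x‖) / (1 + ‖x‖) ^ 3 ≤ ‖fderiv ℂ F x x‖ ∧
      ‖fderiv ℂ F x x‖ ≤ ‖x‖ * (1 + ‖x‖) / (1 - ‖x‖) ^ 3 := by
  obtain ⟨hFd, hFi, g, hgd, hgF⟩ := hbi
  intro x hx
  by_cases hx0 : x = 0
  · simp [hx0]
  have hxn : 0 < ‖x‖ := norm_pos_iff.2 hx0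
  have hx1 : ‖x‖ < 1 := by simpa using hx
  set u : X := ((‖x‖ : ℂ)⁻¹) • x with hu
  have hun : ‖u‖ = 1 := by
    rw [hu, norm_smul, norm_inv, Complex.norm_real, norm_norm, inv_mul_cancel₀ hxn.ne']
  have hu0 : u ≠ 0 := by intro h; rw [h] at hun; simp at hun
  have hxu : x = (‖x‖ : ℂ) • u := by
    rw [hu, smul_smul, mul_inv_cancel₀ (by exact_mod_cast hxn.ne'), one_smul]
  have hmem : MapsTo (fun z : ℂ => z • u) (ball 0 1) (ball 0 1) := by
    intro z hz
    simpa [norm_smul, hun] using hz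
  let h : ℂ → ℂ := fun z => z * f (z • u)
  have hFh : ∀ z ∈ ball (0 : ℂ) 1, F (z • u) = h z • u := by
    intro z hz
    rw [hF _ (hmem hz), smul_smul, mul_comm]
  have hfd : DifferentiableOn ℂ (fun z : ℂ => f (z • u)) (ball 0 1) :=
    hf.comp (by fun_prop) hmem
  have hhd : DifferentiableOn ℂ h (ball 0 1) := differentiableOn_id.mul hfd
  have hhi : InjOn h (ball 0 1) := by
    intro z hz w hw hzw
    have : z • u = w • u := hFi (hmem hz) (hmem hw) (by rw [hFh z hz, hFh w hw, hzw])
    exact smul_left_injective ℂ hu0 this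
  have hFdiff : ∀ y ∈ ball (0 : X) 1, HasFDerivAt F (fderiv ℂ F y) y := fun y hy =>
    (hFd.differentiableAt (isOpen_ball.mem_nhds hy)).hasFDerivAt
  have hder : ∀ z ∈ ball (0 : ℂ) 1, fderiv ℂ F (z • u) u = deriv h z • u := by
    intro z hz
    have a1 : HasDerivAt (fun z : ℂ => z • u) u z := by
      simpa using (hasDerivAt_id z).smul_const u
    have a2 : HasDerivAt (fun z : ℂ => F (z • u)) (fderiv ℂ F (z • u) u) z :=
      (hFdiff _ (hmem hz)).comp_hasDerivAt z a1
    have a3 : HasDerivAt (fun z : ℂ => h z • u) (deriv h z • u) z :=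
      (hhd.differentiableAt (isOpen_ball.mem_nhds hz)).hasDerivAt.smul_const u
    have a4 : (fun z : ℂ => h z • u) =ᶠ[nhds z] fun z : ℂ => F (z • u) := by
      filter_upwards [isOpen_ball.mem_nhds hz] with w hw
      exact (hFh w hw).symm
    exact a2.unique (a3.congr_of_eventuallyEq a4.symm)
  have hne : ∀ z ∈ ball (0 : ℂ) 1, deriv h z ≠ 0 := by
    intro z hz h0
    have hy := hmem hz
    simp only at hy
    have hFu := hder z hz
    rw [h0, zero_smul] at hFu
    have b1 := (hgd (F (z • u)) (mem_image_of_mem F hy)).hasFDerivWithinAt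
    have b2 := b1.comp (z • u) (hFdiff _ hy).hasFDerivWithinAt (mapsTo_image F (ball 0 1))
    have b3 := b2.hasFDerivAt (isOpen_ball.mem_nhds hy)
    have b4 : HasFDerivAt (g ∘ F) (ContinuousLinearMap.id ℂ X) (z • u) := by
      refine (hasFDerivAt_id (z • u)).congr_of_eventuallyEq ?_
      filter_upwards [isOpen_ball.mem_nhds hy] with w hw
      exact hgF w hw
    have b5 := congrArg (fun A : X →L[ℂ] X => A u) (b3.unique b4)
    simp [hFu] at b5
    exact hu0 b5.symm
  have h01 : deriv h 0 = 1 := by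
    have h0 : (0 : ℂ) ∈ ball (0 : ℂ) 1 := mem_ball_self one_pos
    have := (hasDerivAt_id (0 : ℂ)).mul
      (hfd.differentiableAt (isOpen_ball.mem_nhds h0)).hasDerivAt
    refine (this.congr_deriv ?_).deriv
    simp [hf0]
  have hxm : (‖x‖ : ℂ) ∈ ball (0 : ℂ) 1 := by simpa using hx1
  have hnorm : ‖fderiv ℂ F x x‖ = ‖x‖ * ‖deriv h (‖x‖ : ℂ)‖ := by
    have e1 := hder _ hxm
    rw [← hxu] at e1
    have e2 : fderiv ℂ F x x = (‖x‖ : ℂ) • fderiv ℂ F x u := by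
      rw [← map_smul, ← hxu]
    rw [e2, e1, norm_smul, norm_smul, hun, Complex.norm_real, norm_norm, mul_one]
  obtain ⟨lo, hi⟩ := distortion h hhd hhi h01 hne ‖x‖ hxn.le hx1
  rw [hnorm, mul_div_assoc, mul_div_assoc]
  exact ⟨mul_le_mul_of_nonneg_left lo hxn.le, mul_le_mul_of_nonneg_left hi hxn.le⟩
end
end
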